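/- Let G be an Artin group of large type and let i ≠ j. Suppose g_1, g_2 ∈ G are such that no nontrivial element of G(i,j) is a left divisor of g_1, and no nontrivial element of G(i,j) is a right divisor of g_2. If g_1 g_2 ∈ G(i,j), then g_1 g_2 = 1. -/

import Mathlib

namespace ArtinRD

/-- The alternating product `xyxy...` with `m` factors, starting with `x`. -/
def altProd {G : Type*} [Monoid G] : ℕ → G → G → G
  | 0, _, _ => 1
  | n + 1, x, y => x * altProd n y x

/-- The Artin relators determined by a Coxeter-type matrix `M` (`⊤` meaning `∞`). -/
def artinRels (n : ℕ) (M : Fin n → Fin n → ℕ∞) : Set (FreeGroup (Fin n)) :=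
  {r | ∃ i j : Fin n, i ≠ j ∧ ∃ m : ℕ, M i j = (m : ℕ∞) ∧
    r = altProd m (FreeGroup.of i) (FreeGroup.of j) *
        (altProd m (FreeGroup.of j) (FreeGroup.of i))⁻¹}

/-- The Artin group associated to the matrix `M`. -/
abbrev ArtinGroup (n : ℕ) (M : Fin n → Fin n → ℕ∞) : Type := PresentedGroup (artinRels n M)

/-- The standard generator `x_i` of the Artin group. -/
def gen (n : ℕ) (M : Fin n → Fin n → ℕ∞) (i : Fin n) : ArtinGroup n M := PresentedGroup.of i

/-- The set `A = {x_1^{±1}, ..., x_n^{±1}}` of standard letters. -/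
def genSet (n : ℕ) (M : Fin n → Fin n → ℕ∞) : Set (ArtinGroup n M) :=
  {g | ∃ i : Fin n, g = gen n M i ∨ g = (gen n M i)⁻¹}

/-- Word length of `g` with respect to a set `S`: the least `N` such that `g` is a
product of `N` elements of `S`. -/
noncomputable def wordLength {G : Type*} [Group G] (S : Set G) (g : G) : ℕ :=
  sInf {N : ℕ | ∃ w : List G, (∀ a ∈ w, a ∈ S) ∧ w.length = N ∧ w.prod = g}

/-- The word length on an Artin group with respect to the standard letters. -/
noncomputable def ℓA (n : ℕ) (M : Fin n → Fin n → ℕ∞) : ArtinGroup n M → ℕ :=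
  wordLength (genSet n M)

/-- A letter: a generator index together with a sign (`true` = positive). -/
abbrev Letter (n : ℕ) := Fin n × Bool

/-- The group element corresponding to a letter. -/
def toGen (n : ℕ) (M : Fin n → Fin n → ℕ∞) (l : Letter n) : ArtinGroup n M :=
  if l.2 then gen n M l.1 else (gen n M l.1)⁻¹

/-- The group element represented by a word over the letters. -/
def wordElt (n : ℕ) (M : Fin n → Fin n → ℕ∞) (w : List (Letter n)) : ArtinGroup n M :=
  (w.map (toGen n M)).prod

/-- A word is geodesic if its length equals the word length of the element it represents. -/
def IsGeodesic (n : ℕ) (M : Fin n → Fin n → ℕ∞) (w : List (Letter n)) : Prop :=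
  wordLength (genSet n M) (wordElt n M w) = w.length

/-- `h` is a left divisor of `g`: the factorisation `g = h ⬝ (h⁻¹ g)` is geodesic. -/
def IsLeftDiv {G : Type*} [Group G] (ℓ : G → ℕ) (h g : G) : Prop :=
  ℓ h + ℓ (h⁻¹ * g) = ℓ g

/-- `h` is a right divisor of `g`: the factorisation `g = (g h⁻¹) ⬝ h` is geodesic. -/
def IsRightDiv {G : Type*} [Group G] (ℓ : G → ℕ) (h g : G) : Prop :=
  ℓ (g * h⁻¹) + ℓ h = ℓ g

/-- The two-generator ("dihedral") subgroup `G(i,j)`. -/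
def Gij (n : ℕ) (M : Fin n → Fin n → ℕ∞) (i j : Fin n) : Subgroup (ArtinGroup n M) :=
  Subgroup.closure {gen n M i, gen n M j}

/-- The letters `x_i^{±1}, x_j^{±1}` as group elements. -/
def lettersIJ (n : ℕ) (M : Fin n → Fin n → ℕ∞) (i j : Fin n) : Set (ArtinGroup n M) :=
  {gen n M i, (gen n M i)⁻¹, gen n M j, (gen n M j)⁻¹}

/-- The maximal `{x_i,x_j}`-prefix of a word. -/
def ijPrefix (n : ℕ) (i j : Fin n) (w : List (Letter n)) : List (Letter n) :=
  w.takeWhile (fun l => l.1 == i || l.1 == j)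

/-- `h` is a left divisor of `g` lying in `G(i,j)` of maximal word length. -/
def IsMaxLD (n : ℕ) (M : Fin n → Fin n → ℕ∞) (i j : Fin n) (g h : ArtinGroup n M) : Prop :=
  h ∈ Gij n M i j ∧ IsLeftDiv (ℓA n M) h g ∧
    ∀ h' ∈ Gij n M i j, IsLeftDiv (ℓA n M) h' g → ℓA n M h' ≤ ℓA n M h

/-- `h` is a right divisor of `g` lying in `G(i,j)` of maximal word length. -/
def IsMaxRD (n : ℕ) (M : Fin n → Fin n → ℕ∞) (i j : Fin n) (g h : ArtinGroup n M) : Prop :=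
  h ∈ Gij n M i j ∧ IsRightDiv (ℓA n M) h g ∧
    ∀ h' ∈ Gij n M i j, IsRightDiv (ℓA n M) h' g → ℓA n M h' ≤ ℓA n M h

/-! ### Abstract part: systems of dihedral relations -/

/-- The inverse letter. -/
def bar {S : Type*} (a : S × Bool) : S × Bool := (a.1, !a.2)

@[simp] theorem bar_fst {S : Type*} (a : S × Bool) : (bar a).1 = a.1 := rfl
@[simp] theorem bar_bar {S : Type*} (a : S × Bool) : bar (bar a) = a := by
  simp [bar]
theorem bar_ne {S : Type*} (a : S × Bool) : bar a ≠ a := by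
  intro h
  have := congrArg Prod.snd h
  simp [bar] at this
theorem eq_or_bar {S : Type*} {a b : S × Bool} (h : a.1 = b.1) : a = b ∨ a = bar b := by
  rcases a with ⟨a, s⟩
  rcases b with ⟨b, t⟩
  simp only at h
  subst h
  cases s <;> cases t <;> simp [bar]

/-- Words in the letters of types `i` and `j`. -/
def IJ {S : Type*} (i j : S) (u : List (S × Bool)) : Prop := ∀ l ∈ u, l.1 = i ∨ l.1 = j

theorem IJ.nil {S : Type*} {i j : S} : IJ i j [] := by simp [IJ]
theorem IJ_cons {S : Type*} {i j : S} {a : S × Bool} {u} :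
    IJ i j (a :: u) ↔ (a.1 = i ∨ a.1 = j) ∧ IJ i j u := by simp [IJ]
theorem IJ_append {S : Type*} {i j : S} {u v : List (S × Bool)} :
    IJ i j (u ++ v) ↔ IJ i j u ∧ IJ i j v := by
  simp only [IJ, List.mem_append]
  constructor
  · intro h
    exact ⟨fun l hl => h l (Or.inl hl), fun l hl => h l (Or.inr hl)⟩
  · rintro ⟨h1, h2⟩ l (hl | hl)
    · exact h1 l hl
    · exact h2 l hl
theorem IJ.comm {S : Type*} {i j : S} {u : List (S × Bool)} (h : IJ i j u) : IJ j i u :=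
  fun l hl => (h l hl).symm
theorem IJ_replicate {S : Type*} {i j : S} {a : S × Bool} (h : a.1 = i ∨ a.1 = j) (s : ℕ) :
    IJ i j (List.replicate s a) := by
  intro l hl
  rw [List.eq_of_mem_replicate hl]
  exact h

/-- A system of dihedral congruences on words. -/
structure DSys (S : Type*) where
  Deq : S → S → List (S × Bool) → List (S × Bool) → Prop
  refl : ∀ i j u, Deq i j u u
  symm : ∀ {i j u v}, Deq i j u v → Deq i j v u
  trans : ∀ {i j u v w}, Deq i j u v → Deq i j v w → Deq i j u w
  comm : ∀ {i j u v}, Deq i j u v → Deq j i u v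
  app : ∀ {i j u v u' v'}, Deq i j u v → Deq i j u' v' → Deq i j (u ++ u') (v ++ v')
  inv : ∀ i j a u, Deq i j (bar a :: a :: u) u
  par : ∀ {i j u v}, Deq i j u v → u.length % 2 = v.length % 2
  F1 : ∀ {i j a p q}, i ≠ j → IJ i j (a :: p) → IJ i j q → p.length = q.length →
    (∀ v, IJ i j v → Deq i j (a :: p) v → (a :: p).length ≤ v.length) →
    ¬ Deq i j (a :: p) (bar a :: q)
  F2 : ∀ {i j x y b q r s}, i ≠ j → x.1 = i → y.1 = j → b.1 = j → IJ i j q →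
    q.length + 1 = r + 1 + s →
    ¬ Deq i j (List.replicate (r + 1) x ++ List.replicate s y) (b :: q)

namespace DSys

variable {S : Type*} (E : DSys S)

theorem consC {i j a p q} (h : E.Deq i j p q) : E.Deq i j (a :: p) (a :: q) :=
  E.app (E.refl i j [a]) h

theorem inv' (i j a u) : E.Deq i j (a :: bar a :: u) u := by
  have := E.inv i j (bar a) u
  simpa using this

theorem uncons {i j a p q} (h : E.Deq i j (a :: p) (a :: q)) : E.Deq i j p q :=
  E.trans (E.symm (E.inv i j a p)) (E.trans (E.consC h) (E.inv i j a q))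

theorem move {i j a p q} (h : E.Deq i j (a :: p) q) : E.Deq i j p (bar a :: q) :=
  E.trans (E.symm (E.inv i j a p)) (E.consC h)

theorem move' {i j a p q} (h : E.Deq i j p (bar a :: q)) : E.Deq i j (a :: p) q :=
  E.trans (E.consC h) (E.inv' i j a q)

/-- Geodesic words of the dihedral group. -/
def Geo (i j : S) (u : List (S × Bool)) : Prop :=
  ∀ v, IJ i j v → E.Deq i j u v → u.length ≤ v.length

theorem Geo.comm' {i j u} (h : E.Geo i j u) : E.Geo j i u :=
  fun v hv h2 => h v hv.comm (E.comm h2)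

theorem Geo.of_deq {i j u v} (h : E.Geo i j u) (h2 : E.Deq i j u v)
    (hl : u.length = v.length) : E.Geo i j v :=
  fun w hw h3 => hl ▸ h w hw (E.trans h2 h3)

theorem Geo.tail {i j a u} (ha : a.1 = i ∨ a.1 = j) (h : E.Geo i j (a :: u)) : E.Geo i j u := by
  intro v hv h2
  have := h (a :: v) (IJ_cons.2 ⟨ha, hv⟩) (E.consC h2)
  simpa using this

theorem exists_geo {i j} : ∀ (N : ℕ) (u), u.length ≤ N → IJ i j u →
    ∃ v, IJ i j v ∧ E.Deq i j u v ∧ E.Geo i j v := by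
  intro N
  induction N with
  | zero =>
    intro u hu hI
    refine ⟨u, hI, E.refl _ _ _, ?_⟩
    intro v hv h
    omega
  | succ N ih =>
    intro u hu hI
    by_cases hg : E.Geo i j u
    · exact ⟨u, hI, E.refl _ _ _, hg⟩
    · simp only [Geo, not_forall, not_le] at hg
      obtain ⟨v, hv, h1, h2⟩ := hg
      obtain ⟨w, hw, h3, h4⟩ := ih v (by omega) hv
      exact ⟨w, hw, E.trans h1 h3, h4⟩

/-- One-step normalised equivalence of words. -/
inductive Eqv : List (S × Bool) → List (S × Bool) → Prop
  | nil : Eqv [] []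
  | cons (a : S × Bool) {w v : List (S × Bool)} : Eqv w v → Eqv (a :: w) (a :: v)
  | dih {a b : S × Bool} {p q t w v : List (S × Bool)} : a.1 ≠ b.1 → IJ a.1 b.1 p →
      IJ a.1 b.1 q → p.length = q.length → E.Deq a.1 b.1 (a :: p) (b :: q) →
      Eqv w (p ++ t) → Eqv v (q ++ t) → Eqv (a :: w) (b :: v)

/-- Good words (these turn out to be the geodesics). -/
def Good : List (S × Bool) → Prop
  | [] => True
  | a :: w => Good w ∧ ∀ w', ¬ E.Eqv w (bar a :: w')

def NoD (i j : S) (t : List (S × Bool)) : Prop :=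
  ∀ b t', (b.1 = i ∨ b.1 = j) → ¬ E.Eqv t (b :: t')

variable {E}

theorem Eqv.rfl' : ∀ w, E.Eqv w w
  | [] => Eqv.nil
  | a :: w => Eqv.cons a (Eqv.rfl' w)

theorem Eqv.length {w v} (h : E.Eqv w v) : w.length = v.length := by
  induction h with
  | nil => rfl
  | cons a h ih => simp [ih]
  | dih hab hp hq hl hd h1 h2 ih1 ih2 =>
    simp only [List.length_append, List.length_cons] at *
    omega

theorem Eqv.symm' {w v} (h : E.Eqv w v) : E.Eqv v w := by
  induction h with
  | nil => exact Eqv.nil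
  | cons a h ih => exact Eqv.cons a ih
  | dih hab hp hq hl hd h1 h2 ih1 ih2 =>
    exact Eqv.dih hab.symm hq.comm hp.comm hl.symm (E.comm (E.symm hd)) h2 h1

theorem Eqv.app {w v} (h : E.Eqv w v) : ∀ u, E.Eqv (u ++ w) (u ++ v)
  | [] => h
  | a :: u => Eqv.cons a (Eqv.app h u)

theorem Eqv.uncons {a w v} (h : E.Eqv (a :: w) (a :: v)) : E.Eqv w v := by
  cases h with
  | cons _ h => exact h
  | dih hab => exact absurd rfl hab

theorem Eqv.nil_left {w} (h : E.Eqv [] w) : w = [] := by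
  have := h.length
  simpa using this.symm

theorem Good.tail {a w} (h : E.Good (a :: w)) : E.Good w := h.1
theorem Good.suffix : ∀ {u t}, E.Good (u ++ t) → E.Good t
  | [], _, h => h
  | _ :: _, _, h => Good.suffix h.1

theorem NoD.comm {i j t} (h : E.NoD i j t) : E.NoD j i t :=
  fun b t' hb => h b t' hb.symm

/-- Equal geodesics are equivalent. -/
theorem eqv_of_deq {i j} (hij : i ≠ j) (t) : ∀ (u u'), IJ i j u → IJ i j u' →
    u.length = u'.length → E.Geo i j u → E.Deq i j u u' → E.Eqv (u ++ t) (u' ++ t)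
  | [], [], _, _, _, _, _ => Eqv.rfl' _
  | [], b :: q, _, _, h, _, _ => by simp at h
  | a :: p, [], _, _, h, _, _ => by simp at h
  | a :: p, b :: q, hu, hu', hl, hg, hd => by
    simp only [List.length_cons, Nat.add_right_cancel_iff] at hl
    obtain ⟨ha, hp⟩ := IJ_cons.1 hu
    obtain ⟨hb, hq⟩ := IJ_cons.1 hu'
    by_cases hab : a.1 = b.1
    · rcases eq_or_bar hab.symm with rfl | rfl
      · exact Eqv.cons _ (eqv_of_deq hij t p q hp hq hl (Geo.tail _ ha hg) (E.uncons hd))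
      · exact absurd hd (E.F1 hij hu hq hl hg)
    · have key : (a.1 = i ∧ b.1 = j) ∨ (a.1 = j ∧ b.1 = i) := by
        rcases ha with ha | ha <;> rcases hb with hb | hb <;> simp_all
      rcases key with ⟨rfl, rfl⟩ | ⟨rfl, rfl⟩
      · exact Eqv.dih hab hp hq hl hd (Eqv.rfl' _) (Eqv.rfl' _)
      · exact Eqv.dih hab hp.comm hq.comm hl (E.comm hd) (Eqv.rfl' _) (Eqv.rfl' _)

theorem geo_of_good {i j} (hij : i ≠ j) (t) : ∀ u, IJ i j u → E.Good (u ++ t) → E.Geo i j u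
  | [], _, _ => fun v _ _ => by simp
  | a :: p, hu, hg => by
    obtain ⟨ha, hp⟩ := IJ_cons.1 hu
    have hpg := geo_of_good hij t p hp hg.1
    by_contra hcon
    simp only [Geo, not_forall, not_le] at hcon
    obtain ⟨v, hv, h1, h2⟩ := hcon
    have h3 := E.par h1
    have h4 : E.Deq i j p (bar a :: v) := E.move h1
    have hI : IJ i j (bar a :: v) := IJ_cons.2 ⟨ha, hv⟩
    have h5 := hpg _ hI h4
    simp only [List.length_cons] at *
    have := eqv_of_deq hij t p (bar a :: v) hp hI (by simp; omega) hpg h4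
    exact hg.2 _ this

/-- The inductive hypothesis. -/
def PN (E : DSys S) (N : ℕ) : Prop :=
  (∀ w v z, w.length ≤ N → E.Good w → E.Eqv w v → E.Eqv v z → E.Eqv w z) ∧
  (∀ w v, w.length ≤ N → E.Good w → E.Eqv w v → E.Good v)

/-- Gate decomposition. -/
def Gate (E : DSys S) (i j : S) (w u t : List (S × Bool)) : Prop :=
  IJ i j u ∧ E.NoD i j t ∧ E.Eqv w (u ++ t)

section level
variable {N : ℕ} (hP : PN E N)
include hP

theorem gate_exists (i j : S) : ∀ (k : ℕ) (w), w.length ≤ k → w.length ≤ N → E.Good w →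
    ∃ u t, E.Gate i j w u t ∧ E.Good t := by
  intro k
  induction k with
  | zero =>
    intro w hk hN hw
    refine ⟨[], w, ⟨IJ.nil, ?_, Eqv.rfl' _⟩, hw⟩
    intro b t' _ h
    have := h.length
    simp only [List.length_cons] at this
    omega
  | succ k ih =>
    intro w hk hN hw
    by_cases h : E.NoD i j w
    · exact ⟨[], w, ⟨IJ.nil, h, Eqv.rfl' _⟩, hw⟩
    · simp only [NoD, not_forall, not_not] at h
      obtain ⟨b, w', hb, h⟩ := h
      have hl := h.length
      simp only [List.length_cons] at hl
      have hg := hP.2 _ _ hN hw h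
      obtain ⟨u, t, ⟨h1, h2, h3⟩, h4⟩ := ih w' (by omega) (by omega) hg.1
      exact ⟨b :: u, t, ⟨IJ_cons.2 ⟨hb, h1⟩, h2, hP.1 _ _ _ hN hw h (Eqv.cons b h3)⟩, h4⟩

theorem gate_uniq0 {i j : S} : ∀ (k : ℕ) (u t u' t'), (u ++ t).length ≤ k →
    (u ++ t).length ≤ N → E.Good (u ++ t) → IJ i j u → IJ i j u' → E.NoD i j t → E.NoD i j t' →
    E.Eqv (u ++ t) (u' ++ t') → E.Deq i j u u' ∧ E.Eqv t t' := by
  intro k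
  induction k with
  | zero =>
    intro u t u' t' hk hN hw hu hu' ht ht' h
    have hl := h.length
    simp only [List.length_append, nonpos_iff_eq_zero, Nat.add_eq_zero_iff, List.length_eq_zero_iff] at hk hl
    obtain ⟨rfl, rfl⟩ := hk
    simp only [List.length_nil, Nat.add_zero] at hl
    have h1 : u' = [] := List.length_eq_zero_iff.1 (by omega)
    have h2 : t' = [] := List.length_eq_zero_iff.1 (by omega)
    subst h1 h2
    exact ⟨E.refl _ _ _, Eqv.nil⟩
  | succ k ih =>
    intro u t u' t' hk hN hw hu hu' ht ht' h
    match u, u' with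
    | [], [] => exact ⟨E.refl _ _ _, h⟩
    | [], b :: q => exact absurd h (ht b _ (IJ_cons.1 hu').1)
    | a :: p, [] => exact absurd h.symm' (ht' a _ (IJ_cons.1 hu).1)
    | a :: p, b :: q =>
      obtain ⟨ha, hp⟩ := IJ_cons.1 hu
      obtain ⟨hb, hq⟩ := IJ_cons.1 hu'
      have hgood' := hP.2 _ _ hN hw h
      have hl := h.length
      simp only [List.cons_append, List.length_cons] at hk hN h hw hl hgood'
      cases h with
      | cons _ h =>
        obtain ⟨h1, h2⟩ := ih p t q t' (by omega) (by omega) hw.1 hp hq ht ht' h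
        exact ⟨E.consC h1, h2⟩
      | @dih _ _ p' q' s _ _ hab hp' hq' hpq hd h1 h2 =>
        have key : IJ i j p' ∧ IJ i j q' ∧ E.Deq i j (a :: p') (b :: q') := by
          have key : (a.1 = i ∧ b.1 = j) ∨ (a.1 = j ∧ b.1 = i) := by
            rcases ha with ha | ha <;> rcases hb with hb | hb <;> simp_all
          rcases key with ⟨rfl, rfl⟩ | ⟨rfl, rfl⟩
          · exact ⟨hp', hq', hd⟩
          · exact ⟨hp'.comm, hq'.comm, E.comm hd⟩
        obtain ⟨hp', hq', hd⟩ := key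
        have hs := (hP.2 _ _ (by omega) hw.1 h1).suffix
        have hsl := h1.length
        simp only [List.length_append] at hk hN hsl hl
        obtain ⟨r, s0, ⟨hr, hs0, hrs⟩, -⟩ := gate_exists hP i j s.length s le_rfl (by omega) hs
        have e1 : E.Eqv (p ++ t) ((p' ++ r) ++ s0) := by
          rw [List.append_assoc]
          exact hP.1 _ _ _ (by simp; omega) hw.1 h1 (hrs.app _)
        have e2 : E.Eqv (q ++ t') ((q' ++ r) ++ s0) := by
          rw [List.append_assoc]
          exact hP.1 _ _ _ (by simp; omega) hgood'.1 h2 (hrs.app _)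
        obtain ⟨d1, f1⟩ := ih p t (p' ++ r) s0 (by simp; omega) (by simp; omega) hw.1 hp
          (IJ_append.2 ⟨hp', hr⟩) ht hs0 e1
        obtain ⟨d2, f2⟩ := ih q t' (q' ++ r) s0 (by simp; omega) (by simp; omega) hgood'.1 hq
          (IJ_append.2 ⟨hq', hr⟩) ht' hs0 e2
        refine ⟨?_, ?_⟩
        · have := E.app hd (E.refl i j r)
          exact E.trans (E.consC d1) (E.trans this (E.symm (E.consC d2)))
        · have hgt := hw.1.suffix
          exact hP.1 _ _ _ (by omega) hgt f1 f2.symm'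

theorem gate_uniq {i j : S} {w u t u' t'} (hN : w.length ≤ N) (hw : E.Good w)
    (h : E.Gate i j w u t) (h' : E.Gate i j w u' t') :
    E.Deq i j u u' ∧ E.Eqv t t' ∧ u.length = u'.length := by
  obtain ⟨h1, h2, h3⟩ := h
  obtain ⟨h1', h2', h3'⟩ := h'
  have hg := hP.2 _ _ hN hw h3
  have hl := h3.length
  have := hP.1 _ _ _ (by omega) hg h3.symm' h3'
  obtain ⟨a, b⟩ := gate_uniq0 hP _ u t u' t' le_rfl (by omega) hg h1 h1' h2 h2' this
  refine ⟨a, b, ?_⟩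
  have h5 := b.length
  have h6 := this.length
  simp only [List.length_append] at h6
  omega

theorem gate_app {i j : S} {w u v u1 t} (hN : w.length ≤ N) (hw : E.Good w)
    (h : E.Eqv w (u ++ v)) (hu : IJ i j u) (h' : E.Gate i j v u1 t) :
    E.Gate i j w (u ++ u1) t := by
  refine ⟨IJ_append.2 ⟨hu, h'.1⟩, h'.2.1, ?_⟩
  rw [List.append_assoc]
  exact hP.1 _ _ _ hN hw h (h'.2.2.app u)

/-- Geodesic dihedral words followed by gates are good. -/
theorem good_of_geo {i j : S} (t) (ht : E.NoD i j t) (hgt : E.Good t) :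
    ∀ u, (u ++ t).length ≤ N + 1 → IJ i j u → E.Geo i j u → E.Good (u ++ t)
  | [], _, _, _ => hgt
  | a :: p, hN, hu, hg => by
    obtain ⟨ha, hp⟩ := IJ_cons.1 hu
    simp only [List.cons_append, List.length_cons] at hN
    have ih := good_of_geo t ht hgt p (by omega) hp (Geo.tail _ ha hg)
    refine ⟨ih, ?_⟩
    intro w' h
    have hg' := hP.2 _ _ (by omega) ih h
    have hl : (p ++ t).length = w'.length + 1 := h.length
    obtain ⟨q, t1, hG, -⟩ := gate_exists hP i j w'.length w' le_rfl (by omega) hg'.1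
    have hG2 := gate_app hP (u := [bar a]) (i := i) (j := j) (by omega) ih h
      (IJ_cons.2 ⟨ha, IJ.nil⟩) hG
    obtain ⟨h1, -, h3⟩ := gate_uniq hP (by omega) ih ⟨hp, ht, Eqv.rfl' _⟩ hG2
    have := hg q hG.1 (E.move' h1)
    simp at this h3
    omega

theorem strip_exists (j : S) : ∀ (k : ℕ) (w), w.length ≤ k → w.length ≤ N → E.Good w →
    ∃ y s v, y.1 = j ∧ E.Eqv w (List.replicate s y ++ v) ∧ (∀ b t', b.1 = j → ¬ E.Eqv v (b :: t')) := by
  intro k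
  induction k with
  | zero =>
    intro w hk hN hw
    refine ⟨(j, true), 0, w, rfl, Eqv.rfl' _, ?_⟩
    intro b t' _ h
    have := h.length
    simp only [List.length_cons] at this
    omega
  | succ k ih =>
    intro w hk hN hw
    by_cases h : ∀ b t', b.1 = j → ¬ E.Eqv w (b :: t')
    · exact ⟨(j, true), 0, w, rfl, Eqv.rfl' _, h⟩
    · simp only [not_forall, not_not] at h
      obtain ⟨b, w', hb, h⟩ := h
      have hl := h.length
      simp only [List.length_cons] at hl
      have hg := hP.2 _ _ hN hw h
      obtain ⟨y, s, v, hy, h1, h2⟩ := ih w' (by omega) (by omega) hg.1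
      have e := hP.1 _ _ _ hN hw h (Eqv.cons b h1)
      cases s with
      | zero => exact ⟨b, 1, v, hb, e, h2⟩
      | succ s =>
        rcases eq_or_bar (hy.trans hb.symm) with rfl | rfl
        · exact ⟨y, s + 2, v, hy, e, h2⟩
        · exact absurd h1 (hg.2 _)

theorem T_false : ∀ (k : ℕ) (i j l : S) (v v1 : List (S × Bool)) (x y z0 : S × Bool) (s : ℕ) (v' v''),
    i ≠ j → j ≠ l → i ≠ l → v.length ≤ k → v.length ≤ N → E.Good v →
    E.Eqv v (List.replicate (s + 1) y ++ v1) → y.1 = j →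
    (∀ b t', b.1 = j → ¬ E.Eqv v1 (b :: t')) → E.Eqv v1 (x :: v') → x.1 = i →
    E.Eqv v (z0 :: v'') → z0.1 = l → False := by
  intro k
  induction k with
  | zero =>
    intro i j l v v1 x y z0 s v' v'' _ _ _ hk _ _ h
    have := h.length
    simp at this
    omega
  | succ k ih =>
    intro i j l v v1 x y z0 s v' v'' hij hjl hil hk hN hv h hy hno hx hxi hz hzl
    have hlen := h.length
    have hg1 := hP.2 _ _ hN hv h
    have hg1' := hg1.suffix
    simp only [List.length_append, List.length_replicate] at hlen
    obtain ⟨z, q, v2, hz1, h1, h2⟩ := strip_exists hP l _ v1 le_rfl (by omega) hg1'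
    have hlen1 := h1.length
    simp only [List.length_append, List.length_replicate] at hlen1
    have hg2 := (hP.2 _ _ (by omega) hg1' h1).suffix
    obtain ⟨u2, t2, hG2, -⟩ := gate_exists hP j l _ v2 le_rfl (by omega) hg2
    have hG1 := gate_app hP (by omega) hg1' h1 (IJ_replicate (Or.inr hz1) q) hG2
    have hG0 := gate_app hP hN hv h (IJ_replicate (Or.inl hy) (s + 1)) hG1
    have hg3 := hP.2 _ _ hN hv hz
    have hlen3 := hz.length
    simp only [List.length_cons] at hlen3
    obtain ⟨u3, t3, hG3, -⟩ := gate_exists hP j l _ v'' le_rfl (by omega) hg3.1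
    have hG0' := gate_app hP (u := [z0]) hN hv hz (IJ_cons.2 ⟨Or.inr hzl, IJ.nil⟩) hG3
    obtain ⟨d, -, hl⟩ := gate_uniq hP hN hv hG0 hG0'
    simp only [List.length_append, List.length_replicate, List.length_cons, List.length_nil] at hl
    cases u2 with
    | nil =>
      simp only [List.append_nil] at d
      simp only [List.length_nil] at hl
      exact E.F2 hjl hy hz1 hzl hG3.1 (by omega) d
    | cons c u2 =>
      have hc : c.1 = j := by
        rcases (IJ_cons.1 hG2.1).1 with hc | hc
        · exact hc
        · exact absurd hG2.2.2 (h2 _ _ hc)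
      cases q with
      | zero =>
        exact hno c _ hc (hP.1 _ _ _ (by omega) hg1' h1 hG2.2.2)
      | succ q =>
        exact ih j l i v1 v2 c z x q _ _ hjl hil.symm hij.symm (by omega) (by omega) hg1' h1 hz1 h2
          hG2.2.2 hc hx hxi

theorem half {i j : S} {b a : S × Bool} {v v0 q p t r} (hij : i ≠ j) (hN : v.length ≤ N)
    (hv : E.Good v) (hb : b.1 = j) (ha : a.1 = i)
    (h : E.Eqv v (List.replicate r b ++ v0)) (hno : ∀ b t', b.1 = j → ¬ E.Eqv v0 (b :: t'))
    (hq : IJ j i q) (hp : IJ j i p) (hpq : p.length = q.length) (hqt : E.Eqv v (q ++ t))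
    (hd : E.Deq j i (b :: q) (a :: p)) :
    ∃ x s v1 c v2, x.1 = i ∧ E.Eqv v0 (List.replicate (s + 1) x ++ v1) ∧
      (∀ b t', b.1 = i → ¬ E.Eqv v1 (b :: t')) ∧ E.Eqv v1 (c :: v2) ∧ c.1 = j := by
  have hlen := h.length
  simp only [List.length_append, List.length_replicate] at hlen
  have hg0 := (hP.2 _ _ hN hv h).suffix
  obtain ⟨x, s, v1, hx, h1, h2⟩ := strip_exists hP i _ v0 le_rfl (by omega) hg0
  have hlen1 := h1.length
  simp only [List.length_append, List.length_replicate] at hlen1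
  have hg1 := (hP.2 _ _ (by omega) hg0 h1).suffix
  obtain ⟨u1, t1, hG1, -⟩ := gate_exists hP j i _ v1 le_rfl (by omega) hg1
  have hG0 := gate_app hP (by omega) hg0 h1 (IJ_replicate (Or.inr hx) s) hG1
  have hG := gate_app hP hN hv h (IJ_replicate (Or.inl hb) r) hG0
  have hgt := (hP.2 _ _ hN hv hqt).suffix
  have hlen2 := hqt.length
  simp only [List.length_append] at hlen2
  obtain ⟨r', t0, hGt, -⟩ := gate_exists hP j i _ t le_rfl (by omega) hgt
  have hG' := gate_app hP hN hv hqt hq hGt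
  obtain ⟨d, -, hl⟩ := gate_uniq hP hN hv hG hG'
  have d2 : E.Deq j i (b :: (List.replicate r b ++ (List.replicate s x ++ u1))) (a :: (p ++ r')) :=
    E.trans (E.consC d) (E.app hd (E.refl _ _ r'))
  simp only [List.length_append, List.length_replicate] at hl
  cases u1 with
  | nil =>
    simp only [List.append_nil] at d2
    simp only [List.length_nil] at hl
    exact absurd d2 (E.F2 (r := r) hij.symm hb hx ha (IJ_append.2 ⟨hp, hGt.1⟩) (by simp; omega))
  | cons c u1 =>
    have hc : c.1 = j := by
      rcases (IJ_cons.1 hG1.1).1 with hc | hc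
      · exact hc
      · exact absurd hG1.2.2 (h2 _ _ hc)
    cases s with
    | zero => exact absurd (hP.1 _ _ _ (by omega) hg0 h1 hG1.2.2) (hno _ _ hc)
    | succ s => exact ⟨x, s, v1, c, _, hx, h1, h2, hG1.2.2, hc⟩

theorem three_false {i j l : S} {b a c : S × Bool} {v q p t q' p' t'} (hij : i ≠ j) (hjl : j ≠ l)
    (hil : i ≠ l) (hN : v.length ≤ N) (hv : E.Good (b :: v)) (hb : b.1 = j) (ha : a.1 = i)
    (hc : c.1 = l)
    (hq : IJ j i q) (hp : IJ j i p) (hpq : p.length = q.length) (hqt : E.Eqv v (q ++ t))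
    (hd : E.Deq j i (b :: q) (a :: p))
    (hq' : IJ j l q') (hp' : IJ j l p') (hpq' : p'.length = q'.length) (hqt' : E.Eqv v (q' ++ t'))
    (hd' : E.Deq j l (b :: q') (c :: p')) : False := by
  have hst : ∃ r v0, E.Eqv v (List.replicate r b ++ v0) ∧
      ∀ b t', b.1 = j → ¬ E.Eqv v0 (b :: t') := by
    obtain ⟨y, r, v0, hy, h1, h2⟩ := strip_exists hP j _ v le_rfl hN hv.1
    cases r with
    | zero => exact ⟨0, v0, h1, h2⟩
    | succ r =>
      rcases eq_or_bar (hy.trans hb.symm) with rfl | rfl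
      · exact ⟨r + 1, v0, h1, h2⟩
      · exact absurd h1 (hv.2 _)
  obtain ⟨r, v0, h, hno⟩ := hst
  have hlen := h.length
  simp only [List.length_append, List.length_replicate] at hlen
  have hg0 := (hP.2 _ _ hN hv.1 h).suffix
  obtain ⟨x, s, v1, c1, v2, hx, e1, n1, e2, hc1⟩ :=
    half hP hij hN hv.1 hb ha h hno hq hp hpq hqt hd
  obtain ⟨x', s', v1', c1', v2', hx', e1', n1', e2', hc1'⟩ :=
    half hP hjl.symm hN hv.1 hb hc h hno hq' hp' hpq' hqt' hd'
  exact T_false hP _ j i l v0 v1 c1 x x' s _ _ hij.symm hil hjl le_rfl (by omega) hg0 e1 hx n1 e2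
    hc1 e1' hx'

theorem dih_gate {i j : S} {w v p q t} (hN : w.length ≤ N) (hw : E.Good w) (hv : E.Good v)
    (hp : IJ i j p) (hq : IJ i j q) (hl : p.length = q.length)
    (h1 : E.Eqv w (p ++ t)) (h2 : E.Eqv v (q ++ t)) :
    ∃ r t0, E.Gate i j w (p ++ r) t0 ∧ E.Gate i j v (q ++ r) t0 := by
  have hgt := (hP.2 _ _ hN hw h1).suffix
  have hlen1 := h1.length
  have hlen2 := h2.length
  simp only [List.length_append] at hlen1 hlen2
  obtain ⟨r, t0, hG, -⟩ := gate_exists hP i j _ t le_rfl (by omega) hgt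
  exact ⟨r, t0, gate_app hP hN hw h1 hp hG, gate_app hP (by omega) hv h2 hq hG⟩

theorem good_congr {a w w'} (hN : w.length ≤ N) (h : E.Good (a :: w)) (he : E.Eqv w w') :
    E.Good (a :: w') :=
  ⟨hP.2 _ _ hN h.1 he, fun z hz => h.2 z (hP.1 _ _ _ hN h.1 he hz)⟩

theorem good_step {a b w v} (hN : w.length ≤ N) (hw : E.Good (a :: w))
    (h : E.Eqv (a :: w) (b :: v)) : E.Good (b :: v) := by
  have hlen := h.length
  simp only [List.length_cons, Nat.add_right_cancel_iff] at hlen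
  cases h with
  | cons _ h => exact good_congr hP hN hw h
  | @dih _ _ p q t _ _ hab hp hq hpq hd h1 h2 =>
    have hgt := (hP.2 _ _ hN hw.1 h1).suffix
    have hlen1 := h1.length
    have hlen2 := h2.length
    simp only [List.length_append] at hlen1 hlen2
    obtain ⟨r, t0, hG, hgt0⟩ := gate_exists hP a.1 b.1 _ t le_rfl (by omega) hgt
    have hGw := gate_app hP hN hw.1 h1 hp hG
    have hlen3 := hG.2.2.length
    simp only [List.length_append] at hlen3
    have g1 : E.Geo a.1 b.1 (a :: (p ++ r)) := by
      apply geo_of_good hab t0 _ (IJ_cons.2 ⟨Or.inl rfl, hGw.1⟩)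
      exact good_congr hP hN hw hGw.2.2
    have d : E.Deq a.1 b.1 (a :: (p ++ r)) (b :: (q ++ r)) := E.app hd (E.refl _ _ r)
    have g2 : E.Geo a.1 b.1 (b :: (q ++ r)) := Geo.of_deq _ g1 d (by simp; omega)
    have hIq : IJ a.1 b.1 (b :: (q ++ r)) :=
      IJ_cons.2 ⟨Or.inr rfl, IJ_append.2 ⟨hq, hG.1⟩⟩
    have g3 := good_of_geo hP t0 hG.2.1 hgt0 (b :: (q ++ r)) (by simp; omega) hIq g2
    have g4 : E.Good (q ++ t) := by
      apply hP.2 ((q ++ r) ++ t0) _ (by simp; omega) g3.1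
      rw [List.append_assoc]
      exact hG.2.2.symm'.app q
    have g5 := hP.2 _ _ (by simp; omega) g4 h2.symm'
    refine good_congr hP (by simp; omega) g3 ?_
    apply Eqv.symm'
    change E.Eqv v ((q ++ r) ++ t0)
    rw [List.append_assoc]
    exact hP.1 _ _ _ (by omega) g5 h2 (hG.2.2.app q)

theorem trans_step {a b c w v z} (hN : w.length ≤ N) (hw : E.Good (a :: w))
    (h : E.Eqv (a :: w) (b :: v)) (h' : E.Eqv (b :: v) (c :: z)) : E.Eqv (a :: w) (c :: z) := by
  have hv := good_step hP hN hw h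
  have hlen := h.length
  have hlen' := h'.length
  simp only [List.length_cons, Nat.add_right_cancel_iff] at hlen hlen'
  have hz := good_step hP (by omega) hv h'
  cases h with
  | cons _ h =>
    cases h' with
    | cons _ h' => exact Eqv.cons _ (hP.1 _ _ _ hN hw.1 h h')
    | dih hab hp hq hpq hd h1 h2 =>
      exact Eqv.dih hab hp hq hpq hd (hP.1 _ _ _ hN hw.1 h h1) h2
  | @dih _ _ p q t _ _ hab hp hq hpq hd h1 h2 =>
    cases h' with
    | cons _ h' =>
      exact Eqv.dih hab hp hq hpq hd h1 (hP.1 _ _ _ (by omega) hz.1 h'.symm' h2)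
    | @dih _ _ p' q' t' _ _ hbc hp' hq' hpq' hd' h1' h2' =>
      by_cases hac : a.1 = c.1
      · rw [← hac] at hp' hq' hd'
        obtain ⟨r, t0, hG1, hG2⟩ := dih_gate hP hN hw.1 hv.1 hp hq hpq h1 h2
        obtain ⟨r', t0', hG1', hG2'⟩ := dih_gate hP (by omega) hv.1 hz.1 hp'.comm hq'.comm hpq' h1' h2'
        obtain ⟨d, e, hl⟩ := gate_uniq hP (by omega) hv.1 hG2 hG1'
        have D : E.Deq a.1 b.1 (a :: (p ++ r)) (c :: (q' ++ r')) :=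
          E.trans (E.app hd (E.refl _ _ r)) (E.trans (E.consC d) (E.app (E.comm hd') (E.refl _ _ r')))
        have hgw := good_congr hP hN hw hG1.2.2
        have g1 : E.Geo a.1 b.1 (a :: (p ++ r)) :=
          geo_of_good hab t0 _ (IJ_cons.2 ⟨Or.inl rfl, hG1.1⟩) hgw
        have hll : (p ++ r).length = (q' ++ r').length := by
          simp only [List.length_append] at hl ⊢
          omega
        rcases eq_or_bar hac.symm with rfl | rfl
        · refine Eqv.cons _ ?_
          have e1 := eqv_of_deq (E := E) hab t0 (p ++ r) (q' ++ r') hG1.1 hG2'.1 hll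
            (Geo.tail _ (Or.inl rfl) g1) (E.uncons D)
          have l1 := hG1.2.2.length
          have l2 := e1.length
          have l3 := hG2'.2.2.length
          have a1 := hP.1 _ _ _ hN hw.1 hG1.2.2 e1
          have a2 := hP.1 _ _ _ hN hw.1 a1 (e.app _)
          exact hP.1 _ _ _ hN hw.1 a2 hG2'.2.2.symm'
        · exact absurd D (E.F1 hab (IJ_cons.2 ⟨Or.inl rfl, hG1.1⟩) hG2'.1 hll g1)
      · exact absurd (three_false hP hab hbc hac (by omega) hv rfl rfl rfl hq.comm hp.comm hpq h2
          (E.comm (E.symm hd)) hp' hq' hpq'.symm h1' hd') id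

end level

theorem PN_all : ∀ N, PN E N := by
  intro N
  induction N with
  | zero =>
    refine ⟨?_, ?_⟩
    · intro w v z hw _ h1 h2
      have : w = [] := List.length_eq_zero_iff.1 (by omega)
      subst this
      rw [h1.nil_left] at h2
      exact h2
    · intro w v hw _ h1
      have : w = [] := List.length_eq_zero_iff.1 (by omega)
      subst this
      rw [h1.nil_left]
      trivial
  | succ N ih =>
    refine ⟨?_, ?_⟩
    · intro w v z hw hg h1 h2
      have l1 := h1.length
      have l2 := h2.length
      match w, v, z with
      | [], v, z =>
        rw [h1.nil_left] at h2
        exact h2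
      | a :: w, [], z => simp at l1
      | a :: w, b :: v, [] => simp at l2
      | a :: w, b :: v, c :: z => exact trans_step ih (by simpa using hw) hg h1 h2
    · intro w v hw hg h1
      have l1 := h1.length
      match w, v with
      | [], v =>
        rw [h1.nil_left]
        trivial
      | a :: w, [] => simp at l1
      | a :: w, b :: v => exact good_step ih (by simpa using hw) hg h1

end DSys

/-! ### The action on classes of good words -/

namespace DSys

variable {S : Type*} {E : DSys S}

theorem Eqv.tr {w v z} (hw : E.Good w) (h : E.Eqv w v) (h' : E.Eqv v z) : E.Eqv w z :=
  (PN_all w.length).1 _ _ _ le_rfl hw h h'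

theorem Eqv.good {w v} (hw : E.Good w) (h : E.Eqv w v) : E.Good v :=
  (PN_all w.length).2 _ _ le_rfl hw h

/-- The setoid on good words. -/
def gs (E : DSys S) : Setoid {w : List (S × Bool) // E.Good w} where
  r w v := E.Eqv w.1 v.1
  iseqv := ⟨fun _ => Eqv.rfl' _, fun h => h.symm', fun {w _ _} h h' => Eqv.tr w.2 h h'⟩

def X (E : DSys S) := Quotient (gs E)

/-- The class of a good word. -/
def X.mk (w : List (S × Bool)) (h : E.Good w) : E.X := Quotient.mk (gs E) ⟨w, h⟩

theorem X.sound {w v} (hw : E.Good w) (hv : E.Good v) (h : E.Eqv w v) : X.mk w hw = X.mk v hv :=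
  Quotient.sound (s := gs E) h

theorem X.ind {P : E.X → Prop} (h : ∀ w hw, P (X.mk w hw)) (x : E.X) : P x := by
  induction x using Quotient.inductionOn with
  | h w => exact h w.1 w.2

open Classical in
/-- Left multiplication by a letter on words. -/
noncomputable def act0 (E : DSys S) (a : S × Bool) (w : {w : List (S × Bool) // E.Good w}) : E.X :=
  if h : ∃ w', E.Eqv w.1 (bar a :: w') then
    X.mk h.choose (Good.tail (a := bar a) (Eqv.good w.2 h.choose_spec))
  else X.mk (a :: w.1) ⟨w.2, fun w' h' => h ⟨w', h'⟩⟩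

theorem act0_del {a w} {w' : List (S × Bool)} (h : E.Eqv w.1 (bar a :: w')) :
    act0 E a w = X.mk w' (Good.tail (a := bar a) (Eqv.good w.2 h)) := by
  have hex : ∃ w', E.Eqv w.1 (bar a :: w') := ⟨w', h⟩
  rw [act0, dif_pos hex]
  apply X.sound
  have h1 := hex.choose_spec
  exact (Eqv.tr (Eqv.good w.2 h1) h1.symm' h).uncons

theorem act0_add {a} {w : {w : List (S × Bool) // E.Good w}} (h : E.Good (a :: w.1)) :
    act0 E a w = X.mk (a :: w.1) h := by
  have hex : ¬ ∃ w', E.Eqv w.1 (bar a :: w') := fun ⟨w', h'⟩ => h.2 w' h'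
  rw [act0, dif_neg hex]

/-- Left multiplication by a letter. -/
noncomputable def act (E : DSys S) (a : S × Bool) : E.X → E.X :=
  Quotient.lift (act0 E a) (by
    intro w v (h : E.Eqv w.1 v.1)
    by_cases hex : ∃ w', E.Eqv w.1 (bar a :: w')
    · obtain ⟨w', h'⟩ := hex
      rw [act0_del h', act0_del (Eqv.tr v.2 h.symm' h')]
    · have hg : E.Good (a :: w.1) := ⟨w.2, fun w' h' => hex ⟨w', h'⟩⟩
      have hg' := Eqv.good hg (Eqv.cons a h)
      rw [act0_add hg, act0_add hg']
      exact X.sound _ _ (Eqv.cons a h))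

theorem act_del {a w} (hw : E.Good w) {w'} (h : E.Eqv w (bar a :: w')) :
    act E a (X.mk w hw) = X.mk w' (Good.tail (a := bar a) (Eqv.good hw h)) := act0_del (w := ⟨w, hw⟩) h

theorem act_add {a w} (hw : E.Good w) (h : E.Good (a :: w)) :
    act E a (X.mk w hw) = X.mk (a :: w) h := act0_add (w := ⟨w, hw⟩) h

theorem good_or {w} (hw : E.Good w) (a) : (∃ w', E.Eqv w (bar a :: w')) ∨ E.Good (a :: w) := by
  by_cases h : ∃ w', E.Eqv w (bar a :: w')
  · exact Or.inl h
  · exact Or.inr ⟨hw, fun w' h' => h ⟨w', h'⟩⟩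

theorem act_bar (a) (x : E.X) : act E (bar a) (act E a x) = x := by
  induction x using X.ind with
  | h w hw =>
    rcases good_or hw a with ⟨w', h⟩ | h
    · rw [act_del hw h]
      have hg := Eqv.good hw h
      rw [act_add hg.1 hg]
      exact X.sound _ _ h.symm'
    · rw [act_add hw h]
      have : E.Eqv (a :: w) (bar (bar a) :: w) := by
        rw [bar_bar]
        exact Eqv.rfl' _
      rw [act_del h this]

/-- Action of a word. -/
noncomputable def actW (E : DSys S) : List (S × Bool) → E.X → E.X
  | [], x => x
  | a :: u, x => act E a (actW E u x)

theorem actW_append (u v) (x : E.X) : actW E (u ++ v) x = actW E u (actW E v x) := by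
  induction u with
  | nil => rfl
  | cons a u ih => simp [actW, ih]

theorem actW_good : ∀ (u t) (h : E.Good (u ++ t)),
    actW E u (X.mk t h.suffix) = X.mk (u ++ t) h
  | [], _, _ => rfl
  | a :: u, t, h => by
    rw [actW, actW_good u t h.1, act_add]
    rfl

theorem good_app {i j : S} {u t} (ht : E.NoD i j t) (hgt : E.Good t) (hu : IJ i j u)
    (hg : E.Geo i j u) : E.Good (u ++ t) :=
  good_of_geo (PN_all (u ++ t).length) t ht hgt u (by omega) hu hg

theorem actW_gate {i j : S} (hij : i ≠ j) {t} (ht : E.NoD i j t) (hgt : E.Good t) :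
    ∀ u, IJ i j u → ∃ u', ∃ hu' : IJ i j u', ∃ hg : E.Geo i j u', E.Deq i j u u' ∧
      actW E u (X.mk t hgt) = X.mk (u' ++ t) (good_app ht hgt hu' hg)
  | [], _ => ⟨[], IJ.nil, fun v _ _ => by simp, E.refl _ _ _, rfl⟩
  | a :: p, hu => by
    obtain ⟨ha, hp⟩ := IJ_cons.1 hu
    obtain ⟨p', hp', hg, hd, he⟩ := actW_gate hij ht hgt p hp
    have hgood := good_app ht hgt hp' hg
    rcases good_or hgood a with ⟨w', h⟩ | h
    · have hgw := Eqv.good hgood h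
      obtain ⟨q, t1, hG, -⟩ := gate_exists (PN_all w'.length) i j _ w' le_rfl le_rfl hgw.1
      have hG2 := gate_app (PN_all (p' ++ t).length) (u := [bar a]) (i := i) (j := j) le_rfl hgood h
        (IJ_cons.2 ⟨ha, IJ.nil⟩) hG
      obtain ⟨h1, h2, h3⟩ := gate_uniq (PN_all (p' ++ t).length) le_rfl hgood
        ⟨hp', ht, Eqv.rfl' _⟩ hG2
      have hgq : E.Geo i j q := Geo.tail (a := bar a) _ ha (Geo.of_deq _ hg h1 h3)
      refine ⟨q, hG.1, hgq, E.move' (E.trans hd h1), ?_⟩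
      rw [actW, he, act_del _ h]
      apply X.sound
      exact Eqv.tr hgw.1 hG.2.2 (h2.symm'.app q)
    · have hg2 := geo_of_good hij t (a :: p') (IJ_cons.2 ⟨ha, hp'⟩) h
      refine ⟨a :: p', IJ_cons.2 ⟨ha, hp'⟩, hg2, E.consC hd, ?_⟩
      rw [actW, he, act_add _ h]
      rfl

theorem actW_deq {i j : S} (hij : i ≠ j) {u v} (hu : IJ i j u) (hv : IJ i j v)
    (hd : E.Deq i j u v) (x : E.X) : actW E u x = actW E v x := by
  induction x using X.ind with
  | h w hw =>
    obtain ⟨r, t, hG, hgt⟩ := gate_exists (PN_all w.length) i j _ w le_rfl le_rfl hw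
    have hg := Eqv.good hw hG.2.2
    have e : X.mk w hw = actW E r (X.mk t hgt) := by
      rw [actW_good r t hg]
      exact X.sound _ _ hG.2.2
    rw [e, ← actW_append, ← actW_append]
    obtain ⟨u', hu', hgu, hdu, hau⟩ := actW_gate hij hG.2.1 hgt (u ++ r) (IJ_append.2 ⟨hu, hG.1⟩)
    obtain ⟨v', hv', hgv, hdv, hav⟩ := actW_gate hij hG.2.1 hgt (v ++ r) (IJ_append.2 ⟨hv, hG.1⟩)
    rw [hau, hav]
    apply X.sound
    have hd' : E.Deq i j u' v' :=
      E.trans (E.symm hdu) (E.trans (E.app hd (E.refl _ _ r)) hdv)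
    exact eqv_of_deq hij t u' v' hu' hv'
      (le_antisymm (hgu _ hv' hd') (hgv _ hu' (E.symm hd'))) hgu hd'

def level (E : DSys S) : E.X → ℕ := Quotient.lift (fun w => w.1.length) (fun _ _ h => Eqv.length h)

theorem level_act (a) (x : E.X) : level E (act E a x) ≤ level E x + 1 := by
  induction x using X.ind with
  | h w hw =>
    rcases good_or hw a with ⟨w', h⟩ | h
    · rw [act_del hw h]
      have := h.length
      simp only [List.length_cons] at this
      change w'.length ≤ w.length + 1
      omega
    · rw [act_add hw h]
      exact le_rfl

/-- The permutation of a generator. -/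
noncomputable def perm (E : DSys S) (i : S) : Equiv.Perm E.X where
  toFun := act E (i, true)
  invFun := act E (i, false)
  left_inv := fun x => act_bar (i, true) x
  right_inv := fun x => act_bar (i, false) x

end DSys

/-! ### The dihedral model -/

/-- Rightmost letter of an alternating word of length `n` starting with `c`. -/
def rm : ℕ → Bool → Bool
  | 0, c => !c
  | n + 1, c => rm n (!c)

theorem rm_not (n : ℕ) : ∀ c, rm n (!c) = !(rm n c) := by
  induction n with
  | zero => intro c; rfl
  | succ n ih => intro c; simp [rm, ih]

theorem rm_rm (n : ℕ) : ∀ c, rm n (rm n c) = c := by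
  induction n with
  | zero => intro c; simp [rm]
  | succ n ih => intro c; simp [rm, rm_not, ih]

theorem rm_comm (n k : ℕ) (c) : rm n (rm k c) = rm k (rm n c) := by
  have h1 := rm_not n
  have h2 := rm_not k
  have e1 : ∀ c, rm n c = c ∨ rm n c = !c := fun c => by cases rm n c <;> cases c <;> simp
  have e2 : ∀ c, rm k c = c ∨ rm k c = !c := fun c => by cases rm k c <;> cases c <;> simp
  rcases e1 c with h | h <;> rcases e2 c with h' | h' <;> simp [h, h', h1, h2]

/-- The start letter, normalised for the empty list. -/
def nb (a : Bool) : List ℕ → Bool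
  | [] => true
  | _ :: _ => a

/-- Raw states: start letter, lengths of simple factors, exponent of `Δ⁻¹`. -/
abbrev Raw := Bool × List ℕ × ℤ

/-- Left multiplication by a positive letter. -/
def sg (m : ℕ) (a : Bool) : Raw → Raw
  | (_, [], k) => (a, [1], k)
  | (b, l :: t, k) => if a = b then (a, 1 :: l :: t, k) else
      if l + 1 < m then (a, (l + 1) :: t, k) else (nb b t, t, k - 1)

/-- Left multiplication by a negative letter. -/
def ta (m : ℕ) (a : Bool) : Raw → Raw
  | (_, [], k) => (!a, [m - 1], k + 1)
  | (b, l :: t, k) => if a = b then (if l = 1 then (nb a t, t, k) else (!a, (l - 1) :: t, k)) else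
      (b, (m - 1) :: l :: t, k + 1)

/-- Valid states. -/
def Valid (m : ℕ) (y : Raw) : Prop := (∀ l ∈ y.2.1, 1 ≤ l ∧ l < m) ∧ (y.2.1 = [] → y.1 = true)

theorem sg_valid {m : ℕ} (hm : 3 ≤ m) (a : Bool) (y : Raw) (h : Valid m y) : Valid m (sg m a y) := by
  obtain ⟨b, l, k⟩ := y
  cases l with
  | nil => simp [sg, Valid]; omega
  | cons l t =>
    obtain ⟨h1, h2⟩ := h
    simp only [List.mem_cons, forall_eq_or_imp] at h1
    obtain ⟨h1, h3⟩ := h1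
    simp only [sg]
    split_ifs with h4 h5
    · refine ⟨?_, by simp⟩
      simp only [List.mem_cons, forall_eq_or_imp]
      exact ⟨by omega, h1, h3⟩
    · refine ⟨?_, by simp⟩
      simp only [List.mem_cons, forall_eq_or_imp]
      exact ⟨by omega, h3⟩
    · refine ⟨h3, ?_⟩
      intro h
      simp only at h
      simp [h, nb]

theorem ta_valid {m : ℕ} (hm : 3 ≤ m) (a : Bool) (y : Raw) (h : Valid m y) : Valid m (ta m a y) := by
  obtain ⟨b, l, k⟩ := y
  cases l with
  | nil => simp [ta, Valid]; omega
  | cons l t =>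
    obtain ⟨h1, h2⟩ := h
    simp only [List.mem_cons, forall_eq_or_imp] at h1
    obtain ⟨h1, h3⟩ := h1
    simp only [ta]
    split_ifs with h4 h5
    · refine ⟨h3, ?_⟩
      intro h
      simp only at h
      simp [h, nb]
    · refine ⟨?_, by simp⟩
      simp only [List.mem_cons, forall_eq_or_imp]
      exact ⟨by omega, h3⟩
    · refine ⟨?_, by simp⟩
      simp only [List.mem_cons, forall_eq_or_imp]
      exact ⟨by omega, h1, h3⟩

theorem ta_sg {m : ℕ} (hm : 3 ≤ m) (a : Bool) (y : Raw) (h : Valid m y) : ta m a (sg m a y) = y := by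
  obtain ⟨b, l, k⟩ := y
  obtain ⟨h1, h2⟩ := h
  cases l with
  | nil =>
    simp only [forall_const] at h2
    subst h2
    simp [sg, ta, nb]
  | cons l t =>
    simp only [List.mem_cons, forall_eq_or_imp] at h1
    obtain ⟨h1, h3⟩ := h1
    simp only [sg]
    split_ifs with h4 h5
    · simp [ta, nb, h4]
    · have : l ≠ 0 := by omega
      have hb : b = !a := by cases a <;> cases b <;> simp_all
      simp [ta, this, hb]
    · have hb : b = !a := by cases a <;> cases b <;> simp_all
      have hl : m - 1 = l := by omega
      cases t with
      | nil => simp [ta, hb, hl]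
      | cons l' t => simp [ta, nb, hb, hl]

theorem sg_ta {m : ℕ} (hm : 3 ≤ m) (a : Bool) (y : Raw) (h : Valid m y) : sg m a (ta m a y) = y := by
  obtain ⟨b, l, k⟩ := y
  obtain ⟨h1, h2⟩ := h
  have hm1 : ¬ (m - 1 + 1 < m) := by omega
  cases l with
  | nil =>
    simp only [forall_const] at h2
    subst h2
    simp [sg, ta, nb, hm1]
  | cons l t =>
    simp only [List.mem_cons, forall_eq_or_imp] at h1
    obtain ⟨h1, h3⟩ := h1
    simp only [ta]
    split_ifs with h4 h5
    · cases t with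
      | nil => simp [sg, h4, h5]
      | cons l' t => simp [sg, nb, h4, h5]
    · have hl : l - 1 + 1 = l := by omega
      have hl2 : l < m := by omega
      simp [sg, h4, hl, hl2]
    · have hb : b = !a := by cases a <;> cases b <;> simp_all
      simp [sg, nb, hm1, hb]

/-- The permutation of valid states. -/
def permY {m : ℕ} (hm : 3 ≤ m) (a : Bool) : Equiv.Perm {y : Raw // Valid m y} where
  toFun y := ⟨sg m a y.1, sg_valid hm a _ y.2⟩
  invFun y := ⟨ta m a y.1, ta_valid hm a _ y.2⟩
  left_inv y := Subtype.ext (ta_sg hm a _ y.2)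
  right_inv y := Subtype.ext (sg_ta hm a _ y.2)

theorem permY_val {m : ℕ} (hm : 3 ≤ m) (a : Bool) (y) : (permY hm a y).1 = sg m a y.1 := rfl
theorem permY_inv_val {m : ℕ} (hm : 3 ≤ m) (a : Bool) (y) :
    ((permY hm a)⁻¹ y).1 = ta m a y.1 := rfl

/-- Alternating application. -/
def alt (m : ℕ) : ℕ → Bool → Raw → Raw
  | 0, _, y => y
  | n + 1, c, y => sg m c (alt m n (!c) y)

theorem altProd_permY {m : ℕ} (hm : 3 ≤ m) (n : ℕ) : ∀ (c : Bool) (y : {y : Raw // Valid m y}),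
    (altProd n (permY hm c) (permY hm (!c)) y).1 = alt m n c y.1 := by
  induction n with
  | zero => intro c y; rfl
  | succ n ih =>
    intro c y
    have := ih (!c) y
    simp only [Bool.not_not] at this
    simp only [altProd, Equiv.Perm.mul_apply, permY_val, this, alt]

theorem alt1 {m : ℕ} (hm : 3 ≤ m) (b : Bool) (l : List ℕ) (k : ℤ) : ∀ n c, n + 1 < m →
    (rm (n + 1) c = b ∨ l = []) → alt m (n + 1) c (b, l, k) = (c, (n + 1) :: l, k) := by
  intro n
  induction n with
  | zero =>
    intro c hn h
    cases l with
    | nil => simp [alt, sg]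
    | cons l t =>
      simp [rm] at h
      simp [alt, sg, h]
  | succ n ih =>
    intro c hn h
    rw [alt, ih (!c) (by omega) (by simpa [rm] using h)]
    simp [sg, hn]

theorem alt1m {m : ℕ} (hm : 3 ≤ m) (b : Bool) (l : List ℕ) (k : ℤ) (c)
    (h : rm m c = b ∨ l = []) : alt m m c (b, l, k) = (nb (!c) l, l, k - 1) := by
  obtain ⟨n, rfl⟩ : ∃ n, m = n + 2 := ⟨m - 2, by omega⟩
  rw [alt, alt1 hm b l k n (!c) (by omega) (by simpa [rm] using h)]
  simp [sg]

theorem alt2 {m : ℕ} (b : Bool) (l : ℕ) (t : List ℕ) (k : ℤ) : ∀ n c, l + n < m →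
    rm n c ≠ b → alt m n c (b, l :: t, k) = (c, (l + n) :: t, k) := by
  intro n
  induction n with
  | zero =>
    intro c hn h
    simp [rm] at h
    simp [alt, h]
  | succ n ih =>
    intro c hn h
    rw [alt, ih (!c) (by omega) (by simpa [rm] using h)]
    have : l + n + 1 < m := by omega
    simp [sg, this]
    omega

theorem alt3 {m : ℕ} (hm : 3 ≤ m) (b : Bool) (l : ℕ) (t : List ℕ) (k : ℤ) (hl : l < m) :
    ∀ q n c, n + l = m → q < m → rm (n + q + 1) c ≠ b → 1 ≤ n →
      alt m (n + q + 1) c (b, l :: t, k) = (c, (q + 1) :: t, k - 1) ∨ m ≤ q + 1 := by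
  intro q
  induction q with
  | zero =>
    intro n c hn hq h h1
    left
    obtain ⟨n, rfl⟩ : ∃ n', n = n' + 1 := ⟨n - 1, by omega⟩
    simp only [Nat.add_zero, alt, Bool.not_not]
    rw [alt2 b l t k n c (by omega) (by simpa [rm] using h)]
    have : ¬ (l + n + 1 < m) := by omega
    cases t with
    | nil => simp [sg, this]
    | cons l' t => simp [sg, this, nb]
  | succ q ih =>
    intro n c hn hq h h1
    by_cases hq2 : m ≤ q + 1 + 1
    · exact Or.inr hq2
    · left
      rw [alt]
      rcases ih n (!c) hn (by omega) (by simpa [rm] using h) h1 with e | e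
      · rw [show n + (q + 1) = n + q + 1 by ring, e]
        have : q + 1 + 1 < m := by omega
        simp [sg, this]
      · omega

theorem alt_rel {m : ℕ} (hm : 3 ≤ m) (y : Raw) (hy : Valid m y) :
    alt m m true y = alt m m false y := by
  obtain ⟨b, l, k⟩ := y
  cases l with
  | nil => rw [alt1m hm _ _ _ _ (Or.inr rfl), alt1m hm _ _ _ _ (Or.inr rfl)]; rfl
  | cons l t =>
    obtain ⟨h1, -⟩ := hy
    simp only [List.mem_cons, forall_eq_or_imp] at h1
    obtain ⟨h1, -⟩ := h1
    have key : ∀ c, rm m c = b → alt m m c (b, l :: t, k) = alt m m (!c) (b, l :: t, k) := by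
      intro c hc
      rw [alt1m hm _ _ _ _ (Or.inl hc)]
      have hne : rm m (!c) ≠ b := by rw [rm_not, hc]; simp
      obtain ⟨q, rfl⟩ : ∃ q, l = q + 1 := ⟨l - 1, by omega⟩
      have e : m - (q + 1) + q + 1 = m := by omega
      have := alt3 hm b (q + 1) t k h1.2 q (m - (q + 1)) (!c) (by omega) (by omega)
        (by rw [e]; exact hne) (by omega)
      rw [e] at this
      rcases this with h | h
      · rw [h]; rfl
      · omega
    by_cases hc : rm m true = b
    · exact key true hc
    · have : rm m false = b := by
        have := rm_not m true
        simp only [Bool.not_true] at this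
        rw [this]
        cases b <;> simp_all
      exact (key false this).symm

/-! ### Evaluation of states in a group -/

section ev
variable {Q : Type*} [Group Q] (g : Bool → Q)

/-- Evaluation of the simple factors. -/
def evl : Bool → List ℕ → Q
  | _, [] => 1
  | b, l :: t => altProd l (g b) (g (!b)) * evl (rm l b) t

/-- Evaluation of a state. -/
def ev (m : ℕ) (y : Raw) : Q :=
  evl g y.1 y.2.1 * (altProd m (g true) (g false)) ^ (-y.2.2)

theorem altProd_right (n : ℕ) : ∀ c, altProd (n + 1) (g c) (g (!c)) =
    altProd n (g c) (g (!c)) * g (rm (n + 1) c) := by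
  induction n with
  | zero => intro c; simp [altProd, rm]
  | succ n ih =>
    intro c
    have := ih (!c)
    simp only [Bool.not_not] at this
    rw [altProd, this, altProd, mul_assoc]
    simp [rm]

variable {g} {m : ℕ}

theorem delta_any
    (hrel : altProd m (g true) (g false) = altProd m (g false) (g true))
    (c) : altProd m (g c) (g (!c)) = altProd m (g true) (g false) := by
  cases c
  · exact hrel.symm
  · rfl

theorem delta_gen
    (hrel : altProd m (g true) (g false) = altProd m (g false) (g true))
    (e) : altProd m (g true) (g false) * g e =
    g (rm m (!e)) * altProd m (g true) (g false) := by
  have h := altProd_right g m (rm m (!e))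
  have r : rm (m + 1) (rm m (!e)) = e := by simp [rm, rm_not, rm_rm]
  have h2 := delta_any hrel (!(rm m (!e)))
  rw [Bool.not_not] at h2
  rw [altProd, h2, delta_any hrel, r] at h
  exact h.symm

theorem delta_alt
    (hrel : altProd m (g true) (g false) = altProd m (g false) (g true))
    (l : ℕ) : ∀ e, altProd m (g true) (g false) * altProd l (g e) (g (!e)) =
    altProd l (g (rm m (!e))) (g (!(rm m (!e)))) * altProd m (g true) (g false) := by
  induction l with
  | zero => intro e; simp [altProd]
  | succ l ih =>
    intro e
    have := ih (!e)
    simp only [rm_not, Bool.not_not] at this ⊢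
    have h2 := delta_gen hrel e
    rw [altProd, ← mul_assoc, h2, mul_assoc, this, altProd, rm_not, mul_assoc]

theorem delta_evl
    (hrel : altProd m (g true) (g false) = altProd m (g false) (g true))
    (t : List ℕ) : ∀ e, altProd m (g true) (g false) * evl g e t =
    evl g (rm m (!e)) t * altProd m (g true) (g false) := by
  induction t with
  | nil => intro e; simp [evl]
  | cons l t ih =>
    intro e
    rw [evl, ← mul_assoc, delta_alt hrel, mul_assoc, ih, evl, mul_assoc]
    congr 3
    rw [← rm_not, rm_comm]

theorem ev_sg
    (hrel : altProd m (g true) (g false) = altProd m (g false) (g true))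
    (hm : 3 ≤ m) (a : Bool) (y : Raw) (hy : Valid m y) :
    ev g m (sg m a y) = g a * ev g m y := by
  obtain ⟨b, l, k⟩ := y
  cases l with
  | nil => simp [sg, ev, evl, altProd]
  | cons l t =>
    obtain ⟨h1, h2⟩ := hy
    simp only [List.mem_cons, forall_eq_or_imp] at h1
    obtain ⟨h1, h3⟩ := h1
    simp only [sg]
    split_ifs with h4 h5
    · subst h4
      simp [ev, evl, altProd, rm, mul_assoc]
    · have hb : b = !a := by cases a <;> cases b <;> simp_all
      subst hb
      simp [ev, evl, altProd, rm, mul_assoc]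
    · have hb : b = !a := by cases a <;> cases b <;> simp_all
      subst hb
      have hl : m = l + 1 := by omega
      have e1 : evl g (nb (!a) t) t = evl g (!a) t := by cases t <;> rfl
      simp only [ev, evl, e1]
      have e2 : g a * altProd l (g (!a)) (g (!!a)) = altProd m (g true) (g false) := by
        rw [← delta_any hrel a, hl, altProd, Bool.not_not]
      have e3 := delta_evl hrel t (rm l (!a))
      have e4 : rm m (!(rm l (!a))) = !a := by
        rw [hl, rm, Bool.not_not, rm_rm]
      rw [e4] at e3
      rw [← mul_assoc, ← mul_assoc, e2, e3, mul_assoc]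
      congr 1
      rw [neg_sub, sub_eq_add_neg, zpow_add, zpow_one]

theorem ev_ta
    (hrel : altProd m (g true) (g false) = altProd m (g false) (g true))
    (hm : 3 ≤ m) (a : Bool) (y : Raw) (hy : Valid m y) :
    ev g m (ta m a y) = (g a)⁻¹ * ev g m y := by
  have := ev_sg hrel hm a _ (ta_valid hm a y hy)
  rw [sg_ta hm a y hy] at this
  rw [this, inv_mul_cancel_left]

end ev

/-! ### Length functions -/

/-- The weight of a simple element of length `l`. -/
def cw (θ l : ℕ) : ℤ := if l ≤ θ then l else 2 * θ - l

/-- The length function with parameter `θ`. -/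
def fl (m θ : ℕ) (y : Raw) : ℤ := (y.2.1.map (cw θ)).sum - y.2.2 * cw θ m

/-- Multiplication by a signed letter. -/
def stp (m : ℕ) (a : Bool) (s : Bool) (y : Raw) : Raw := if s then sg m a y else ta m a y

theorem stp_valid {m : ℕ} (hm : 3 ≤ m) (a s : Bool) (y : Raw) (h : Valid m y) :
    Valid m (stp m a s y) := by
  cases s
  · exact ta_valid hm a y h
  · exact sg_valid hm a y h

theorem cw_succ (θ l : ℕ) : cw θ (l + 1) = cw θ l + if l < θ then 1 else -1 := by
  unfold cw
  split_ifs <;> push_cast <;> omega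

theorem fl_sg {m : ℕ} (hm : 3 ≤ m) (θ : ℕ) (a b : Bool) (l : List ℕ) (k : ℤ) (hy : Valid m (b, l, k)) :
    fl m θ (sg m a (b, l, k)) = fl m θ (b, l, k) +
      if (if a = b then 0 else l.headD 0) < θ then 1 else -1 := by
  have h0 := cw_succ θ 0
  have h00 : cw θ 0 = 0 := by simp [cw]
  cases l with
  | nil =>
    simp only [sg, fl, List.map_cons, List.map_nil, List.sum_cons, List.sum_nil, List.headD_nil,
      ite_self]
    simp only [Nat.zero_add] at h0
    rw [h0, h00]
    ring
  | cons l t =>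
    obtain ⟨h1, h2⟩ := hy
    simp only [List.mem_cons, forall_eq_or_imp] at h1
    obtain ⟨h1, h3⟩ := h1
    by_cases h4 : a = b
    · simp only [sg, fl, h4, if_true, List.map_cons, List.sum_cons]
      simp only [Nat.zero_add] at h0
      rw [h0, h00]
      ring
    · simp only [sg, h4, if_false, List.headD_cons]
      have hs := cw_succ θ l
      split_ifs at hs ⊢ with h5 h6 h6
      · simp only [fl, List.map_cons, List.sum_cons, hs]
        ring
      · simp only [fl, List.map_cons, List.sum_cons, hs]
        ring
      · have hl : m = l + 1 := by omega
        simp only [fl, List.map_cons, List.sum_cons, hl, hs]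
        ring
      · have hl : m = l + 1 := by omega
        simp only [fl, List.map_cons, List.sum_cons, hl, hs]
        ring

theorem fl_ta {m : ℕ} (hm : 3 ≤ m) (θ : ℕ) (a b : Bool) (l : List ℕ) (k : ℤ) (hy : Valid m (b, l, k)) :
    fl m θ (ta m a (b, l, k)) = fl m θ (b, l, k) +
      if θ < (if a = b ∧ l ≠ [] then l.headD 0 else m) then 1 else -1 := by
  have hm1 : cw θ m = cw θ (m - 1) + if m - 1 < θ then 1 else -1 := by
    have := cw_succ θ (m - 1)
    rwa [show m - 1 + 1 = m by omega] at this
  have e1 : (m - 1 < θ) ↔ ¬ (θ < m) := by omega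
  simp only [e1] at hm1
  cases l with
  | nil =>
    simp only [ta, fl, List.map_cons, List.map_nil, List.sum_cons, List.sum_nil, ne_eq,
      not_true_eq_false, and_false, if_false]
    split_ifs at hm1 ⊢ with h5 <;> first | (exfalso; omega) | linarith
  | cons l t =>
    obtain ⟨h1, h2⟩ := hy
    simp only [List.mem_cons, forall_eq_or_imp] at h1
    obtain ⟨h1, h3⟩ := h1
    by_cases h4 : a = b
    · simp only [ta, h4, if_true, ne_eq, List.headD_cons, reduceCtorEq, not_false_eq_true,
        and_self]
      obtain ⟨l, rfl⟩ : ∃ l', l = l' + 1 := ⟨l - 1, by omega⟩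
      have hs := cw_succ θ l
      have e2 : (l < θ) ↔ ¬ (θ < l + 1) := by omega
      simp only [e2] at hs
      by_cases hl : l = 0
      · subst hl
        have h00 : cw θ 0 = 0 := by simp [cw]
        simp only [Nat.zero_add, h00] at hs
        simp only [Nat.zero_add, if_true, fl, List.map_cons, List.sum_cons, hs]
        split_ifs <;> ring
      · simp only [Nat.add_eq_right, hl, if_false, fl, List.map_cons, List.sum_cons, hs,
          Nat.add_sub_cancel]
        split_ifs <;> ring
    · simp only [ta, h4, if_false, false_and, fl, List.map_cons, List.sum_cons]
      split_ifs at hm1 ⊢ with h5 <;> first | (exfalso; omega) | linarith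

/-! ### Words in the dihedral model -/

theorem cw_min (θ l : ℕ) : cw θ l = 2 * min (θ : ℤ) l - l := by
  unfold cw
  split_ifs with h
  · rw [min_eq_right (by exact_mod_cast h)]; ring
  · rw [min_eq_left (by push Not at h; exact_mod_cast h.le)]

theorem fl_step {m : ℕ} (hm : 3 ≤ m) (θ : ℕ) (a s : Bool) (y : Raw) (hy : Valid m y) :
    fl m θ (stp m a s y) = fl m θ y + 1 ∨ fl m θ (stp m a s y) = fl m θ y - 1 := by
  obtain ⟨b, l, k⟩ := y
  cases s
  · have := fl_ta hm θ a b l k hy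
    simp only [stp, Bool.false_eq_true, if_false]
    rw [this]
    generalize (if a = b ∧ l ≠ [] then l.headD 0 else m) = h
    split_ifs
    · left; rfl
    · right; rfl
  · have := fl_sg hm θ a b l k hy
    simp only [stp, if_true]
    rw [this]
    generalize (if a = b then 0 else l.headD 0) = h
    split_ifs
    · left; rfl
    · right; rfl

/-- The state of a word. -/
def stB (m : ℕ) (w : List (Bool × Bool)) : Raw := w.foldr (fun a y => stp m a.1 a.2 y) (true, [], 0)

theorem stB_cons (m : ℕ) (a : Bool × Bool) (w) : stB m (a :: w) = stp m a.1 a.2 (stB m w) := rfl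

theorem stB_valid {m : ℕ} (hm : 3 ≤ m) (w) : Valid m (stB m w) := by
  induction w with
  | nil => simp [stB, Valid]
  | cons a w ih => exact stp_valid hm _ _ _ ih

theorem fl_le {m : ℕ} (hm : 3 ≤ m) (θ : ℕ) (w) : fl m θ (stB m w) ≤ w.length := by
  induction w with
  | nil => simp [stB, fl]
  | cons a w ih =>
    rw [stB_cons]
    push_cast [List.length_cons]
    rcases fl_step hm θ a.1 a.2 _ (stB_valid hm w) with h | h <;> omega

theorem stp_inv {m : ℕ} (hm : 3 ≤ m) (a s : Bool) (y : Raw) (hy : Valid m y) :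
    stp m a s (stp m a (!s) y) = y := by
  cases s
  · exact ta_sg hm a y hy
  · exact sg_ta hm a y hy

theorem stp_inv' {m : ℕ} (hm : 3 ≤ m) (a s : Bool) (y : Raw) (hy : Valid m y) :
    stp m a (!s) (stp m a s y) = y := by
  have := stp_inv hm a (!s) y hy
  rwa [Bool.not_not] at this

theorem fl_par (m θ : ℕ) (y : Raw) : ∃ z : ℤ, fl m θ y = fl m 0 y + 2 * z := by
  obtain ⟨b, l, k⟩ := y
  have h : ∃ z : ℤ, (l.map (cw θ)).sum = (l.map (cw 0)).sum + 2 * z := by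
    induction l with
    | nil => exact ⟨0, by simp⟩
    | cons l t ih =>
      obtain ⟨z, hz⟩ := ih
      refine ⟨z + (min (θ : ℤ) l - min ((0 : ℕ) : ℤ) l), ?_⟩
      simp only [List.map_cons, List.sum_cons, hz, cw_min]
      ring
  obtain ⟨z, hz⟩ := h
  refine ⟨z - k * (min (θ : ℤ) m - min ((0 : ℕ) : ℤ) m), ?_⟩
  simp only [fl, hz]
  rw [cw_min, cw_min]
  ring

theorem conc1 (α γ β l : ℤ) (h1 : α < γ) (h2 : γ < β) :
    (β - γ) * min α l + (γ - α) * min β l ≤ (β - α) * min γ l := by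
  rcases le_total l α with h | h
  · rw [min_eq_right h, min_eq_right (by omega), min_eq_right (by omega)]
    nlinarith
  rcases le_total l γ with h' | h'
  · rw [min_eq_left h, min_eq_right (by omega), min_eq_right h']
    nlinarith
  rcases le_total l β with h'' | h''
  · rw [min_eq_left h, min_eq_right h'', min_eq_left h']
    nlinarith
  · rw [min_eq_left h, min_eq_left h'', min_eq_left h']
    nlinarith

theorem conc2 (α γ β : ℕ) (h1 : α < γ) (h2 : γ < β) (t : List ℕ) :
    ((β : ℤ) - γ) * (t.map (cw α)).sum + (γ - α) * (t.map (cw β)).sum ≤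
      (β - α) * (t.map (cw γ)).sum := by
  induction t with
  | nil => simp
  | cons l t ih =>
    simp only [List.map_cons, List.sum_cons, cw_min]
    have := conc1 α γ β l (by exact_mod_cast h1) (by exact_mod_cast h2)
    nlinarith

theorem conc (m α β l : ℕ) (b : Bool) (t : List ℕ) (k c : ℤ) (h1 : α < l) (h2 : l < β) (h3 : β ≤ m)
    (hα : c ≤ fl m α (b, l :: t, k)) (hβ : c ≤ fl m β (b, l :: t, k)) :
    c < fl m l (b, l :: t, k) := by
  have h := conc2 α l β h1 h2 t
  simp only [fl, List.map_cons, List.sum_cons] at hα hβ ⊢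
  generalize (t.map (cw α)).sum = A at *
  generalize (t.map (cw β)).sum = B at *
  generalize (t.map (cw l)).sum = C at *
  rw [cw_min, cw_min] at hα hβ ⊢
  have h1' : (α : ℤ) < l := by exact_mod_cast h1
  have h2' : (l : ℤ) < β := by exact_mod_cast h2
  have h3' : (β : ℤ) ≤ m := by exact_mod_cast h3
  rw [min_eq_left h1'.le, min_eq_left (by omega)] at hα
  rw [min_eq_right h2'.le, min_eq_left h3'] at hβ
  rw [min_eq_left le_rfl, min_eq_left (by omega)]
  by_contra hc
  push Not at hc
  have e1 := mul_le_mul_of_nonneg_left hα (by omega : (0 : ℤ) ≤ β - l)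
  have e2 := mul_le_mul_of_nonneg_left hβ (by omega : (0 : ℤ) ≤ l - α)
  have e3 := mul_le_mul_of_nonneg_left hc (by omega : (0 : ℤ) ≤ β - α)
  have e4 := mul_pos (by omega : (0 : ℤ) < β - l) (by omega : (0 : ℤ) < l - α)
  nlinarith

theorem lower {m : ℕ} (hm : 3 ≤ m) (y : Raw) (hy : Valid m y) (N : ℕ)
    (h : ∀ θ ≤ m, fl m θ y ≤ (N + 1 : ℕ)) (θ₀ : ℕ) (hθ₀ : θ₀ ≤ m) (hN : ¬ fl m θ₀ y ≤ N) :
    ∃ a s, ∀ θ ≤ m, fl m θ (stp m a s y) ≤ N := by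
  have hmax : fl m θ₀ y = N + 1 := by
    have := h θ₀ hθ₀
    push_cast at this
    omega
  have hpar : ∀ θ, fl m θ y ≠ N := by
    intro θ he
    obtain ⟨z, hz⟩ := fl_par m θ y
    obtain ⟨z', hz'⟩ := fl_par m θ₀ y
    omega
  have red : ∀ a s, (∀ θ ≤ m, fl m θ y = N + 1 → fl m θ (stp m a s y) = fl m θ y - 1) →
      ∃ a s, ∀ θ ≤ m, fl m θ (stp m a s y) ≤ N := by
    intro a s hh
    refine ⟨a, s, fun θ hθ => ?_⟩
    have h1 := h θ hθ
    push_cast at h1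
    have h2 := hpar θ
    by_cases h3 : fl m θ y = N + 1
    · have := hh θ hθ h3
      omega
    · rcases fl_step hm θ a s y hy with h4 | h4 <;> omega
  obtain ⟨b, l, k⟩ := y
  cases l with
  | nil =>
    have hf : ∀ θ ≤ m, fl m θ (b, [], k) = -(k * (2 * θ - m)) := by
      intro θ hθ
      simp only [fl, List.map_nil, List.sum_nil]
      rw [cw_min, min_eq_left (by exact_mod_cast hθ)]
      ring
    rcases lt_trichotomy k 0 with hk | hk | hk
    · apply red true false
      intro θ hθ he
      have h2 := h m le_rfl
      rw [hf _ hθ] at he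
      rw [hf m le_rfl] at h2
      have : θ = m := by
        by_contra hne
        have : (θ : ℤ) < m := by omega
        push_cast at h2
        nlinarith
      subst this
      simp only [stp, Bool.false_eq_true, if_false]
      rw [fl_ta hm θ _ _ _ _ hy]
      simp
      ring
    · rw [hf _ hθ₀, hk] at hmax
      omega
    · apply red true true
      intro θ hθ he
      have h2 := h 0 (Nat.zero_le _)
      rw [hf _ hθ] at he
      rw [hf 0 (Nat.zero_le _)] at h2
      have : θ = 0 := by
        by_contra hne
        have : (0 : ℤ) < θ := by omega
        push_cast at h2
        nlinarith
      subst this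
      simp only [stp, if_true]
      rw [fl_sg hm 0 _ _ _ _ hy]
      simp
      ring
  | cons l t =>
    by_cases hA : ∃ α ≤ m, α < l ∧ fl m α (b, l :: t, k) = N + 1
    · by_cases hB : ∃ β ≤ m, l < β ∧ fl m β (b, l :: t, k) = N + 1
      · obtain ⟨α, hα, hα1, hα2⟩ := hA
        obtain ⟨β, hβ, hβ1, hβ2⟩ := hB
        have := conc m α β l b t k (N + 1) hα1 hβ1 hβ hα2.ge hβ2.ge
        have h2 := h l (by omega)
        push_cast at h2
        omega
      · push Not at hB
        apply red (!b) true
        intro θ hθ he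
        have : ¬ l < θ := fun hh => hB θ hθ hh he
        simp only [stp, if_true]
        rw [fl_sg hm θ _ _ _ _ hy]
        simp [this]
        ring
    · push Not at hA
      apply red b false
      intro θ hθ he
      have : ¬ θ < l := fun hh => hA θ hθ hh he
      simp only [stp, Bool.false_eq_true, if_false]
      rw [fl_ta hm θ _ _ _ _ hy]
      simp [this]
      ring

theorem upper {m : ℕ} (hm : 3 ≤ m) : ∀ (N : ℕ) (y : Raw), Valid m y → (∀ θ ≤ m, fl m θ y ≤ N) →
    ∃ w : List (Bool × Bool), w.length ≤ N ∧ stB m w = y := by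
  intro N
  induction N with
  | zero =>
    intro y hy h
    refine ⟨[], le_rfl, ?_⟩
    obtain ⟨b, l, k⟩ := y
    have h0 := h 0 (Nat.zero_le _)
    have hmm := h m le_rfl
    cases l with
    | nil =>
      have hb := hy.2 rfl
      simp only at hb
      simp only [fl, List.map_nil, List.sum_nil, cw_min] at h0 hmm
      rw [min_eq_left (by omega)] at h0 hmm
      have : k = 0 := by
        push_cast at h0 hmm
        have : (0 : ℤ) < m := by omega
        nlinarith
      simp [stB, hb, this]
    | cons l t =>
      exfalso
      have hl := hy.1 l (by simp)
      have e : fl m 0 (b, l :: t, k) = - fl m m (b, l :: t, k) := by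
        have : ∀ t : List ℕ, (∀ x ∈ t, x < m) →
            (t.map (cw 0)).sum = - (t.map (cw m)).sum := by
          intro t
          induction t with
          | nil => simp
          | cons x t ih =>
            intro hx
            have hx0 := hx x (by simp)
            simp only [List.map_cons, List.sum_cons]
            rw [ih (fun z hz => hx z (by simp [hz])), cw_min, cw_min, min_eq_left (by omega),
              min_eq_right (by omega)]
            push_cast
            ring
        have := this (l :: t) (fun x hx => (hy.1 x hx).2)
        simp only [fl]
        rw [this, cw_min, cw_min, min_eq_left (by omega), min_eq_right (by omega)]
        push_cast
        ring
      push_cast at h0 hmm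
      have := conc m 0 m l b t k 0 (by omega) (by omega) le_rfl (by omega) (by omega)
      have h2 := h l (by omega)
      push_cast at h2
      omega
  | succ N ih =>
    intro y hy h
    by_cases hN : ∀ θ ≤ m, fl m θ y ≤ N
    · obtain ⟨w, hw, h2⟩ := ih y hy hN
      exact ⟨w, by omega, h2⟩
    · push Not at hN
      obtain ⟨θ₀, hθ₀, hN⟩ := hN
      obtain ⟨a, s, hs⟩ := lower hm y hy N h θ₀ hθ₀ (not_le.2 hN)
      obtain ⟨w, hw, h2⟩ := ih _ (stp_valid hm a s y hy) hs
      refine ⟨(a, !s) :: w, by simpa using hw, ?_⟩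
      rw [stB_cons, h2]
      exact stp_inv' hm a s y hy

theorem raise {m : ℕ} (hm : 3 ≤ m) (θ : ℕ) (hθ : θ ≤ m) (a : Bool) (y : Raw) (hy : Valid m y) :
    ∃ s, fl m θ (stp m a s y) = fl m θ y + 1 := by
  obtain ⟨b, l, k⟩ := y
  have h1 : fl m θ (stp m a true (b, l, k)) = _ := fl_sg hm θ a b l k hy
  have h2 : fl m θ (stp m a false (b, l, k)) = _ := fl_ta hm θ a b l k hy
  have hl : l ≠ [] → 1 ≤ l.headD 0 ∧ l.headD 0 < m := by
    intro hne
    cases l with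
    | nil => exact absurd rfl hne
    | cons l t => exact hy.1 l (by simp)
  by_cases hc : θ < (if a = b ∧ l ≠ [] then l.headD 0 else m)
  · exact ⟨false, by rw [h2, if_pos hc]⟩
  · refine ⟨true, ?_⟩
    rw [h1, if_pos]
    by_cases hn : l = []
    · subst hn
      simp at hc ⊢
      omega
    · have := hl hn
      by_cases hab : a = b
      · simp only [hab, hn, ne_eq, not_false_eq_true, and_self, if_true] at hc ⊢
        omega
      · simp only [hab, false_and, if_false] at hc ⊢
        omega

theorem F1B {m : ℕ} (hm : 3 ≤ m) (a s : Bool) (p q : List (Bool × Bool)) (hl : p.length = q.length)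
    (hg : ∀ w, stB m w = stB m ((a, s) :: p) → p.length + 1 ≤ w.length)
    (he : stB m ((a, s) :: p) = stB m ((a, !s) :: q)) : False := by
  have hv := stB_valid hm ((a, s) :: p)
  have hex : ∃ θ ≤ m, (p.length : ℤ) + 1 ≤ fl m θ (stB m ((a, s) :: p)) := by
    by_contra hc
    push Not at hc
    obtain ⟨w, hw, h2⟩ := upper hm p.length _ hv (fun θ hθ => by have := hc θ hθ; omega)
    have := hg w h2
    omega
  obtain ⟨θ, hθ, h1⟩ := hex
  have h2 : stp m a (!s) (stB m ((a, s) :: p)) = stB m p := by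
    rw [stB_cons]; exact stp_inv' hm a s _ (stB_valid hm p)
  have h3 : stp m a s (stB m ((a, s) :: p)) = stB m q := by
    rw [he, stB_cons]; exact stp_inv hm a s _ (stB_valid hm q)
  have hp := fl_le hm θ p
  have hq := fl_le hm θ q
  obtain ⟨s', hs'⟩ := raise hm θ hθ a _ hv
  have : s' = s ∨ s' = !s := by cases s <;> cases s' <;> simp
  rcases this with rfl | rfl
  · rw [h3] at hs'; omega
  · rw [h2] at hs'; omega

theorem raise_sg {m : ℕ} (hm : 3 ≤ m) (θ : ℕ) (hθ : 1 ≤ θ) (a : Bool) (y : Raw) (hy : Valid m y)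
    (h : y.2.1 = [] ∨ y.1 = a ∨ y.2.1.headD 0 < θ) : fl m θ (stp m a true y) = fl m θ y + 1 := by
  obtain ⟨b, l, k⟩ := y
  have h1 : fl m θ (stp m a true (b, l, k)) = _ := fl_sg hm θ a b l k hy
  rw [h1, if_pos]
  split_ifs with hab
  · omega
  · simp only at h
    rcases h with h | h | h
    · simp [h]; omega
    · exact absurd h.symm hab
    · exact h

theorem raise_ta {m : ℕ} (hm : 3 ≤ m) (θ : ℕ) (hθ : θ < m) (a : Bool) (y : Raw) (hy : Valid m y)
    (h : y.2.1 = [] ∨ y.1 = !a ∨ θ < y.2.1.headD 0) :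
    fl m θ (stp m a false y) = fl m θ y + 1 := by
  obtain ⟨b, l, k⟩ := y
  have h1 : fl m θ (stp m a false (b, l, k)) = _ := fl_ta hm θ a b l k hy
  rw [h1, if_pos]
  split_ifs with hab
  · simp only at h
    rcases h with h | h | h
    · exact absurd h hab.2
    · rw [hab.1] at h; cases b <;> simp at h
    · exact h
  · omega

theorem runP {m : ℕ} (hm : 3 ≤ m) (θ : ℕ) (hθ : 1 ≤ θ) (a : Bool) (y : Raw) (hy : Valid m y)
    (h : y.2.1 = [] ∨ y.1 = a) (r : ℕ) : Valid m ((stp m a true)^[r] y) ∧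
    fl m θ ((stp m a true)^[r] y) = fl m θ y + r ∧
    ((r = 0 ∧ (stp m a true)^[r] y = y) ∨ (((stp m a true)^[r] y).1 = a ∧
      ((stp m a true)^[r] y).2.1.headD 0 = 1)) := by
  induction r with
  | zero => simp [hy]
  | succ r ih =>
    rw [Function.iterate_succ_apply']
    obtain ⟨h1, h2, h3⟩ := ih
    generalize (stp m a true)^[r] y = z at *
    have h4 : z.2.1 = [] ∨ z.1 = a := by
      rcases h3 with ⟨-, h3⟩ | h3
      · rw [h3]; exact h
      · exact Or.inr h3.1
    refine ⟨stp_valid hm _ _ _ h1, ?_, Or.inr ?_⟩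
    · rw [raise_sg hm θ hθ a z h1 (by tauto), h2]; push_cast; ring
    · obtain ⟨b, l, k⟩ := z
      cases l with
      | nil => simp [stp, sg]
      | cons l t =>
        simp only [reduceCtorEq, false_or] at h4
        simp [stp, sg, h4]

theorem runN {m : ℕ} (hm : 3 ≤ m) (θ : ℕ) (hθ : θ < m) (a : Bool) (y : Raw) (hy : Valid m y)
    (h : y.2.1 = [] ∨ y.1 = !a) (r : ℕ) : Valid m ((stp m a false)^[r] y) ∧
    fl m θ ((stp m a false)^[r] y) = fl m θ y + r ∧
    ((r = 0 ∧ (stp m a false)^[r] y = y) ∨ (((stp m a false)^[r] y).1 = !a ∧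
      ((stp m a false)^[r] y).2.1.headD 0 = m - 1)) := by
  induction r with
  | zero => simp [hy]
  | succ r ih =>
    rw [Function.iterate_succ_apply']
    obtain ⟨h1, h2, h3⟩ := ih
    generalize (stp m a false)^[r] y = z at *
    have h4 : z.2.1 = [] ∨ z.1 = !a := by
      rcases h3 with ⟨-, h3⟩ | h3
      · rw [h3]; exact h
      · exact Or.inr h3.1
    refine ⟨stp_valid hm _ _ _ h1, ?_, Or.inr ?_⟩
    · rw [raise_ta hm θ hθ a z h1 (by tauto), h2]; push_cast; ring
    · obtain ⟨b, l, k⟩ := z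
      cases l with
      | nil => simp [stp, ta]
      | cons l t =>
        simp only [reduceCtorEq, false_or] at h4
        simp [stp, ta, h4]

theorem runP' {m : ℕ} (hm : 3 ≤ m) (a : Bool) (y : Raw) (hy : Valid m y)
    (r : ℕ) : Valid m ((stp m a true)^[r] y) ∧
    fl m m ((stp m a true)^[r] y) = fl m m y + r := by
  induction r with
  | zero => simp [hy]
  | succ r ih =>
    rw [Function.iterate_succ_apply']
    obtain ⟨h1, h2⟩ := ih
    generalize (stp m a true)^[r] y = z at *
    refine ⟨stp_valid hm _ _ _ h1, ?_⟩
    rw [raise_sg hm m (by omega) a z h1 ?_, h2]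
    · push_cast; ring
    · obtain ⟨b, l, k⟩ := z
      cases l with
      | nil => simp
      | cons l t => exact Or.inr (Or.inr (h1.1 l (by simp)).2)

theorem runN' {m : ℕ} (hm : 3 ≤ m) (a : Bool) (y : Raw) (hy : Valid m y)
    (r : ℕ) : Valid m ((stp m a false)^[r] y) ∧
    fl m 0 ((stp m a false)^[r] y) = fl m 0 y + r := by
  induction r with
  | zero => simp [hy]
  | succ r ih =>
    rw [Function.iterate_succ_apply']
    obtain ⟨h1, h2⟩ := ih
    generalize (stp m a false)^[r] y = z at *
    refine ⟨stp_valid hm _ _ _ h1, ?_⟩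
    rw [raise_ta hm 0 (by omega) a z h1 ?_, h2]
    · push_cast; ring
    · obtain ⟨b, l, k⟩ := z
      cases l with
      | nil => simp
      | cons l t => exact Or.inr (Or.inr (h1.1 l (by simp)).1)

theorem stB_rep (m : ℕ) (a s : Bool) (r : ℕ) (w) :
    stB m (List.replicate r (a, s) ++ w) = (stp m a s)^[r] (stB m w) := by
  induction r with
  | zero => rfl
  | succ r ih =>
    rw [List.replicate_succ, List.cons_append, stB_cons, ih, Function.iterate_succ_apply']

theorem three_runs {m : ℕ} (hm : 3 ≤ m) (x sx sy sb : Bool) (r s : ℕ) :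
    ∃ θ, fl m θ (stp m (!x) sb ((stp m x sx)^[r + 1] ((stp m (!x) sy)^[s] (true, [], 0)))) =
      r + s + 2 := by
  have hv0 : Valid m (true, [], 0) := by simp [Valid]
  have hf0 : ∀ θ, fl m θ (true, [], 0) = 0 := by simp [fl]
  have hx : (!(!x)) = x := Bool.not_not x
  -- runs of `y`
  have yP : ∀ θ, 1 ≤ θ → _ := fun θ hθ => runP hm θ hθ (!x) (true, [], 0) hv0 (Or.inl rfl) s
  have yN : ∀ θ, θ < m → _ := fun θ hθ => runN hm θ hθ (!x) (true, [], 0) hv0 (Or.inl rfl) s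
  cases sy
  · cases sx
    · cases sb
      · -- all negative
        refine ⟨0, ?_⟩
        obtain ⟨v1, f1⟩ := runN' hm (!x) (true, [], 0) hv0 s
        obtain ⟨v2, f2⟩ := runN' hm x _ v1 (r + 1)
        obtain ⟨v3, f3⟩ := runN' hm (!x) _ v2 1
        rw [Function.iterate_one] at f3
        rw [f3, f2, f1, hf0]
        push_cast
        ring
      · -- b positive, x negative, y negative
        refine ⟨1, ?_⟩
        obtain ⟨v1, f1, e1⟩ := yN 1 (by omega)
        generalize (stp m (!x) false)^[s] (true, [], 0) = z at *
        have g1 := raise_ta hm 1 (by omega) x z v1 (by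
          rcases e1 with e1 | e1
          · rw [e1.2]; exact Or.inl rfl
          · right; right; rw [e1.2]; omega)
        have g2 : (stp m x false z).1 = !x := by
          obtain ⟨b, l, k⟩ := z
          cases l with
          | nil => simp [stp, ta]
          | cons l t =>
            simp only [Prod.mk.injEq, reduceCtorEq, false_and, and_false, false_or,
              List.headD_cons] at e1
            have : m - 1 ≠ 1 := by omega
            simp [stp, ta, e1.1, e1.2, this]
        rw [Function.iterate_succ_apply]
        obtain ⟨v2, f2, e2⟩ := runN hm 1 (by omega) x _ (stp_valid hm x false z v1) (Or.inr g2) r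
        have e3 : ((stp m x false)^[r] (stp m x false z)).1 = !x := by
          rcases e2 with e2 | e2
          · rw [e2.2]; exact g2
          · exact e2.1
        rw [raise_sg hm 1 le_rfl (!x) _ v2 (Or.inr (Or.inl e3)), f2, g1, f1, hf0]
        push_cast
        ring
    · -- x positive, y negative
      have key : ∀ θ, 1 ≤ θ → θ < m → _ := fun θ h1 h2 => by
        obtain ⟨v1, f1, e1⟩ := yN θ h2
        have := runP hm θ h1 x _ v1 (by
          rcases e1 with e1 | e1
          · rw [e1.2]; exact Or.inl rfl
          · right; rw [e1.1, hx]) (r + 1)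
        rw [f1, hf0] at this
        exact this
      cases sb
      · refine ⟨1, ?_⟩
        obtain ⟨v2, f2, e2⟩ := key 1 le_rfl (by omega)
        have e3 := e2.resolve_left (by omega)
        rw [raise_ta hm 1 (by omega) (!x) _ v2 (Or.inr (Or.inl (by rw [hx]; exact e3.1))), f2]
        push_cast
        ring
      · refine ⟨2, ?_⟩
        obtain ⟨v2, f2, e2⟩ := key 2 (by omega) (by omega)
        have e3 := e2.resolve_left (by omega)
        rw [raise_sg hm 2 (by omega) (!x) _ v2 (Or.inr (Or.inr (by rw [e3.2]; omega))), f2]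
        push_cast
        ring
  · cases sx
    · -- x negative, y positive
      have key : ∀ θ, 1 ≤ θ → θ < m → _ := fun θ h1 h2 => by
        obtain ⟨v1, f1, e1⟩ := yP θ h1
        have := runN hm θ h2 x _ v1 (by
          rcases e1 with e1 | e1
          · rw [e1.2]; exact Or.inl rfl
          · right; exact e1.1) (r + 1)
        rw [f1, hf0] at this
        exact this
      cases sb
      · refine ⟨1, ?_⟩
        obtain ⟨v2, f2, e2⟩ := key 1 le_rfl (by omega)
        have e3 := e2.resolve_left (by omega)
        rw [raise_ta hm 1 (by omega) (!x) _ v2 (Or.inr (Or.inr (by rw [e3.2]; omega))), f2]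
        push_cast
        ring
      · refine ⟨2, ?_⟩
        obtain ⟨v2, f2, e2⟩ := key 2 (by omega) (by omega)
        have e3 := e2.resolve_left (by omega)
        rw [raise_sg hm 2 (by omega) (!x) _ v2 (Or.inr (Or.inl e3.1)), f2]
        push_cast
        ring
    · cases sb
      · -- b negative, x positive, y positive
        refine ⟨2, ?_⟩
        obtain ⟨v1, f1, e1⟩ := yP 2 (by omega)
        generalize (stp m (!x) true)^[s] (true, [], 0) = z at *
        have g1 := raise_sg hm 2 (by omega) x z v1 (by
          rcases e1 with e1 | e1
          · rw [e1.2]; exact Or.inl rfl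
          · right; right; rw [e1.2]; omega)
        have g2 : (stp m x true z).1 = x := by
          obtain ⟨b, l, k⟩ := z
          cases l with
          | nil => simp [stp, sg]
          | cons l t =>
            simp only [Prod.mk.injEq, reduceCtorEq, false_and, and_false, false_or,
              List.headD_cons] at e1
            have : 1 + 1 < m := by omega
            simp [stp, sg, e1.1, e1.2, this]
        rw [Function.iterate_succ_apply]
        obtain ⟨v2, f2, e2⟩ := runP hm 2 (by omega) x _ (stp_valid hm x true z v1) (Or.inr g2) r
        have e3 : ((stp m x true)^[r] (stp m x true z)).1 = x := by
          rcases e2 with e2 | e2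
          · rw [e2.2]; exact g2
          · exact e2.1
        rw [raise_ta hm 2 (by omega) (!x) _ v2 (Or.inr (Or.inl (by rw [hx]; exact e3))),
          f2, g1, f1, hf0]
        push_cast
        ring
      · -- all positive
        refine ⟨m, ?_⟩
        obtain ⟨v1, f1⟩ := runP' hm (!x) (true, [], 0) hv0 s
        obtain ⟨v2, f2⟩ := runP' hm x _ v1 (r + 1)
        obtain ⟨v3, f3⟩ := runP' hm (!x) _ v2 1
        rw [Function.iterate_one] at f3
        rw [f3, f2, f1, hf0]
        push_cast
        ring

theorem F2B {m : ℕ} (hm : 3 ≤ m) (x sx sy sb : Bool) (r s : ℕ) (q : List (Bool × Bool))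
    (hl : q.length + 1 = r + 1 + s)
    (he : stB m (List.replicate (r + 1) (x, sx) ++ List.replicate s (!x, sy)) =
      stB m ((!x, sb) :: q)) : False := by
  obtain ⟨θ, hθ⟩ := three_runs hm x sx sy (!sb) r s
  have e : stB m (List.replicate s (!x, sy)) = (stp m (!x) sy)^[s] (true, [], 0) := by
    have := stB_rep m (!x) sy s []
    rw [List.append_nil] at this
    exact this
  rw [← e, ← stB_rep, he, stB_cons] at hθ
  simp only at hθ
  rw [stp_inv' hm _ _ _ (stB_valid hm q)] at hθ
  have := fl_le hm θ q
  omega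

/-! ### The concrete dihedral systems -/

section concrete

variable {S : Type} (M : S → S → ℕ∞)

/-- The relators of the dihedral group on `i`, `j`. -/
def drel (i j : S) : Set (FreeGroup S) :=
  {r | ∃ a b : S, ((a = i ∧ b = j) ∨ (a = j ∧ b = i)) ∧ ∃ m : ℕ, M a b = (m : ℕ∞) ∧
    r = altProd m (FreeGroup.of a) (FreeGroup.of b) *
        (altProd m (FreeGroup.of b) (FreeGroup.of a))⁻¹}

theorem drel_comm (i j : S) : drel M i j = drel M j i := by
  ext r
  simp only [drel, Set.mem_setOf_eq, or_comm]

/-- The dihedral congruence. -/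
def deq (i j : S) (u v : List (S × Bool)) : Prop :=
  (PresentedGroup.mk (drel M i j) (FreeGroup.mk u)) = PresentedGroup.mk (drel M i j) (FreeGroup.mk v)

theorem map_altProd {G H : Type*} [Group G] [Group H] (f : G →* H) (n : ℕ) : ∀ x y,
    f (altProd n x y) = altProd n (f x) (f y) := by
  induction n with
  | zero => intro x y; simp [altProd]
  | succ n ih => intro x y; simp [altProd, ih]

theorem altProd_self {G : Type*} [Group G] (n : ℕ) (x : G) : altProd n x x = x ^ n := by
  induction n with
  | zero => simp [altProd]
  | succ n ih => rw [altProd, ih, pow_succ']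

theorem deq_hom {H : Type*} [Group H] {i j : S} (f : FreeGroup S →* H)
    (hf : ∀ m : ℕ, M i j = m → altProd m (f (FreeGroup.of i)) (f (FreeGroup.of j)) =
      altProd m (f (FreeGroup.of j)) (f (FreeGroup.of i)))
    (hf' : ∀ m : ℕ, M j i = m → altProd m (f (FreeGroup.of i)) (f (FreeGroup.of j)) =
      altProd m (f (FreeGroup.of j)) (f (FreeGroup.of i))) {u v : List (S × Bool)}
    (h : deq M i j u v) : f (FreeGroup.mk u) = f (FreeGroup.mk v) := by
  have hle : Subgroup.normalClosure (drel M i j) ≤ f.ker := by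
    apply Subgroup.normalClosure_le_normal
    rintro r ⟨a, b, hab, m, hm, rfl⟩
    rw [SetLike.mem_coe, MonoidHom.mem_ker, map_mul, map_inv, map_altProd, map_altProd,
      mul_inv_eq_one]
    rcases hab with ⟨rfl, rfl⟩ | ⟨rfl, rfl⟩
    · exact hf m hm
    · exact (hf' m hm).symm
  have h1 : (FreeGroup.mk u)⁻¹ * FreeGroup.mk v ∈ Subgroup.normalClosure (drel M i j) := by
    have : (QuotientGroup.mk (FreeGroup.mk u) :
      FreeGroup S ⧸ Subgroup.normalClosure (drel M i j)) = QuotientGroup.mk (FreeGroup.mk v) := h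
    exact QuotientGroup.eq.1 this
  have h2 := hle h1
  rw [MonoidHom.mem_ker, map_mul, map_inv, inv_mul_eq_one] at h2
  exact h2

theorem lift_mk_cons {H : Type*} [Group H] (f : FreeGroup S →* H) (a : S × Bool) (w) :
    f (FreeGroup.mk (a :: w)) = (if a.2 then f (FreeGroup.of a.1) else (f (FreeGroup.of a.1))⁻¹) *
      f (FreeGroup.mk w) := by
  have : FreeGroup.mk (a :: w) = FreeGroup.mk [a] * FreeGroup.mk w := by
    rw [FreeGroup.mul_mk]; rfl
  rw [this, map_mul]
  congr 1
  obtain ⟨a, s⟩ := a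
  cases s
  · simp only [Bool.false_eq_true, if_false]
    rw [← map_inv]
    congr 1
  · simp only [if_true]
    rfl

theorem deq_par {i j : S} {u v : List (S × Bool)} (h : deq M i j u v) :
    u.length % 2 = v.length % 2 := by
  let f : FreeGroup S →* Multiplicative (ZMod 2) :=
    FreeGroup.lift (fun _ => Multiplicative.ofAdd (1 : ZMod 2))
  have h1 := deq_hom M f (fun m _ => by simp [f]) (fun m _ => by simp [f]) h
  have h2 : ∀ w : List (S × Bool), Multiplicative.toAdd (f (FreeGroup.mk w)) = (w.length : ZMod 2) := by
    intro w
    induction w with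
    | nil => change Multiplicative.toAdd (f 1) = _; simp
    | cons a w ih =>
      rw [lift_mk_cons]
      have : (if a.2 then f (FreeGroup.of a.1) else (f (FreeGroup.of a.1))⁻¹) =
          Multiplicative.ofAdd (1 : ZMod 2) := by
        have e : f (FreeGroup.of a.1) = Multiplicative.ofAdd (1 : ZMod 2) := by simp [f]
        rw [e]
        split_ifs
        · rfl
        · decide
      rw [this, toAdd_mul, ih]
      push_cast [List.length_cons]
      rw [toAdd_ofAdd]
      ring
  have h3 : (u.length : ZMod 2) = v.length := by rw [← h2, ← h2, h1]
  exact (ZMod.natCast_eq_natCast_iff' _ _ _).1 h3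

/-- Translation of words. -/
noncomputable def tr (i : S) (u : List (S × Bool)) : List (Bool × Bool) := by
  classical exact u.map (fun a => (decide (a.1 = i), a.2))

/-- Translation back. -/
def tb (i j : S) (u : List (Bool × Bool)) : List (S × Bool) :=
  u.map (fun a => (if a.1 then i else j, a.2))

theorem tr_length (i : S) (u) : (tr i u).length = u.length := by simp [tr]
theorem tb_length (i j : S) (u) : (tb i j u).length = u.length := by simp [tb]
theorem tb_IJ (i j : S) (u) : IJ i j (tb i j u) := by
  intro l hl
  simp only [tb, List.mem_map] at hl
  obtain ⟨a, -, rfl⟩ := hl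
  simp only
  split_ifs
  · exact Or.inl rfl
  · exact Or.inr rfl
theorem tb_tr {i j : S} (u) (h : IJ i j u) : tb i j (tr i u) = u := by
  simp only [tb, tr, List.map_map]
  conv_rhs => rw [← List.map_id u]
  apply List.map_congr_left
  intro a ha
  obtain ⟨a, s⟩ := a
  by_cases hai : a = i
  · simp [hai]
  · have := (h _ ha).resolve_left hai
    simp only at this
    subst this
    simp [hai]
theorem tr_tb {i j : S} (hij : i ≠ j) (u) : tr i (tb i j u) = u := by
  simp only [tb, tr, List.map_map]
  conv_rhs => rw [← List.map_id u]
  apply List.map_congr_left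
  intro a ha
  obtain ⟨a, s⟩ := a
  cases a <;> simp [hij.symm]

theorem deq_stB (hsymm : ∀ i j, M i j = M j i) {i j : S} (hij : i ≠ j) {m : ℕ} (hm : 3 ≤ m)
    (hM : M i j = m) {u v : List (S × Bool)} (h : deq M i j u v) :
    stB m (tr i u) = stB m (tr i v) := by
  classical
  let f : FreeGroup S →* Equiv.Perm {y : Raw // Valid m y} :=
    FreeGroup.lift (fun a => permY hm (decide (a = i)))
  have fi : f (FreeGroup.of i) = permY hm true := by simp [f]
  have fj : f (FreeGroup.of j) = permY hm false := by simp [f, hij.symm]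
  have hrel : altProd m (permY hm true) (permY hm false) =
      altProd m (permY hm false) (permY hm true) := by
    ext1 y
    apply Subtype.ext
    have h1 := altProd_permY hm m true y
    have h2 := altProd_permY hm m false y
    simp only [Bool.not_true, Bool.not_false] at h1 h2
    rw [h1, h2]
    exact alt_rel hm y.1 y.2
  have hf : ∀ m' : ℕ, M i j = m' → altProd m' (f (FreeGroup.of i)) (f (FreeGroup.of j)) =
      altProd m' (f (FreeGroup.of j)) (f (FreeGroup.of i)) := by
    intro m' hm'
    have : m' = m := by rw [hM] at hm'; exact_mod_cast hm'.symm
    rw [fi, fj, this, hrel]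
  have h1 := deq_hom M f hf (fun m' hm' => hf m' (by rw [hsymm, hm'])) h
  have h2 : ∀ w : List (S × Bool), (f (FreeGroup.mk w) ⟨(true, [], 0), by simp [Valid]⟩).1 =
      stB m (tr i w) := by
    intro w
    induction w with
    | nil => change ((f 1) _).1 = _; simp [stB, tr]
    | cons a w ih =>
      rw [lift_mk_cons, Equiv.Perm.mul_apply]
      have e : f (FreeGroup.of a.1) = permY hm (decide (a.1 = i)) := by simp [f]
      rw [e]
      have e2 : tr i (a :: w) = (decide (a.1 = i), a.2) :: tr i w := by
        simp only [tr, List.map_cons]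
      rw [e2, stB_cons, ← ih]
      simp only
      cases a.2
      · simp only [Bool.false_eq_true, if_false]
        rfl
      · simp only [if_true]
        rfl
  rw [← h2, ← h2, h1]

theorem stB_deq {i j : S} {m : ℕ} (hm : 3 ≤ m)
    (hM : M i j = m) {u v : List (Bool × Bool)} (h : stB m u = stB m v) :
    deq M i j (tb i j u) (tb i j v) := by
  let g : Bool → PresentedGroup (drel M i j) := fun c =>
    PresentedGroup.mk (drel M i j) (FreeGroup.of (if c then i else j))
  have hrel : altProd m (g true) (g false) = altProd m (g false) (g true) := by
    have : PresentedGroup.mk (drel M i j) (altProd m (FreeGroup.of i) (FreeGroup.of j) *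
        (altProd m (FreeGroup.of j) (FreeGroup.of i))⁻¹) = 1 :=
      PresentedGroup.one_of_mem ⟨i, j, Or.inl ⟨rfl, rfl⟩, m, hM, rfl⟩
    rw [map_mul, map_inv, mul_inv_eq_one, map_altProd, map_altProd] at this
    exact this
  have h2 : ∀ w, PresentedGroup.mk (drel M i j) (FreeGroup.mk (tb i j w)) = ev g m (stB m w) := by
    intro w
    induction w with
    | nil =>
      change PresentedGroup.mk (drel M i j) 1 = _
      simp [stB, ev, evl]
    | cons a w ih =>
      obtain ⟨a, s⟩ := a
      have : tb i j ((a, s) :: w) = (if a then i else j, s) :: tb i j w := rfl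
      rw [this, lift_mk_cons, stB_cons, ih]
      simp only
      cases s
      · simp only [Bool.false_eq_true, if_false, stp]
        exact (ev_ta hrel hm a _ (stB_valid hm w)).symm
      · simp only [if_true, stp]
        exact (ev_sg hrel hm a _ (stB_valid hm w)).symm
  rw [deq, h2, h2, h]

theorem top_deq {i j : S} (hM : M i j = ⊤) (hM' : M j i = ⊤) {u v : List (S × Bool)}
    (h : deq M i j u v) : FreeGroup.mk u = FreeGroup.mk v := by
  have := deq_hom M (MonoidHom.id _) (fun m hm => by rw [hM] at hm; simp at hm)
    (fun m hm => by rw [hM'] at hm; simp at hm) h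
  exact this

theorem deq_F1 (hsymm : ∀ i j, M i j = M j i) (hlarge : ∀ i j, i ≠ j → 3 ≤ M i j)
    {i j : S} {a : S × Bool} {p q : List (S × Bool)} (hij : i ≠ j) (hp : IJ i j (a :: p))
    (hq : IJ i j q) (hl : p.length = q.length)
    (hg : ∀ v, IJ i j v → deq M i j (a :: p) v → (a :: p).length ≤ v.length)
    (h : deq M i j (a :: p) (bar a :: q)) : False := by
  classical
  by_cases hM : M i j = ⊤
  · have h1 := top_deq M hM (by rw [hsymm, hM]) h
    have hr : FreeGroup.reduce (a :: p) = a :: p := by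
      have hs := FreeGroup.reduce.red (L := a :: p)
      have h3 : ((a :: p).length) ≤ (FreeGroup.reduce (a :: p)).length := by
        apply hg
        · intro l hl
          exact hp l (hs.sublist.subset hl)
        · unfold deq
          rw [FreeGroup.reduce.self]
      exact hs.sublist.eq_of_length_le h3
    have h4 : FreeGroup.Red (bar a :: q) (a :: p) := by
      rw [← hr, FreeGroup.reduce.sound h1]
      exact FreeGroup.reduce.red
    have h5 := h4.sublist.eq_of_length_le (by simp [hl])
    have h6 := List.head_eq_of_cons_eq h5
    exact bar_ne a h6.symm
  · obtain ⟨m, hm⟩ := ENat.ne_top_iff_exists.1 hM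
    have hm3 : 3 ≤ m := by
      have := hlarge i j hij
      rw [← hm] at this
      exact_mod_cast this
    have h1 := deq_stB M hsymm hij hm3 hm.symm h
    have e1 : tr i (a :: p) = (decide (a.1 = i), a.2) :: tr i p := by
      simp only [tr, List.map_cons]
    have e2 : tr i (bar a :: q) = (decide (a.1 = i), !a.2) :: tr i q := by
      simp only [tr, List.map_cons]; congr 2
    rw [e1, e2] at h1
    refine F1B hm3 _ _ (tr i p) (tr i q) (by rw [tr_length, tr_length, hl]) ?_ h1
    intro w hw
    rw [← e1] at hw
    have h3 := stB_deq M hm3 hm.symm hw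
    rw [tb_tr _ hp] at h3
    have := hg _ (tb_IJ i j w) h3.symm
    rw [tb_length] at this
    rw [tr_length]
    exact this

theorem deq_F2 (hsymm : ∀ i j, M i j = M j i) (hlarge : ∀ i j, i ≠ j → 3 ≤ M i j)
    {i j : S} {x y b : S × Bool} {q : List (S × Bool)} {r s : ℕ} (hij : i ≠ j) (hx : x.1 = i)
    (hy : y.1 = j) (hb : b.1 = j) (hq : IJ i j q) (hl : q.length + 1 = r + 1 + s)
    (h : deq M i j (List.replicate (r + 1) x ++ List.replicate s y) (b :: q)) : False := by
  classical
  by_cases hM : M i j = ⊤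
  · have h1 := top_deq M hM (by rw [hsymm, hM]) h
    have hr : FreeGroup.IsReduced (List.replicate (r + 1) x ++ List.replicate s y) := by
      unfold FreeGroup.IsReduced
      rw [List.isChain_append]
      refine ⟨List.isChain_replicate_of_rel _ (fun _ => rfl),
        List.isChain_replicate_of_rel _ (fun _ => rfl), ?_⟩
      intro x' hx' y' hy' he
      have e1 : x' = x := List.eq_of_mem_replicate (List.mem_of_getLast? hx')
      have e2 : y' = y := List.eq_of_mem_replicate (List.mem_of_head? hy')
      rw [e1, e2, hx, hy] at he
      exact absurd he hij
    have h4 : FreeGroup.Red (b :: q) (List.replicate (r + 1) x ++ List.replicate s y) := by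
      rw [← hr.reduce_eq, FreeGroup.reduce.sound h1]
      exact FreeGroup.reduce.red
    have h5 := h4.sublist.eq_of_length_le (by simp; omega)
    have h6 : x = b := by
      rw [List.replicate_succ, List.cons_append] at h5
      exact List.head_eq_of_cons_eq h5
    rw [h6, hb] at hx
    exact hij hx.symm
  · obtain ⟨m, hm⟩ := ENat.ne_top_iff_exists.1 hM
    have hm3 : 3 ≤ m := by
      have := hlarge i j hij
      rw [← hm] at this
      exact_mod_cast this
    have h1 := deq_stB M hsymm hij hm3 hm.symm h
    have e1 : tr i (List.replicate (r + 1) x ++ List.replicate s y) =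
        List.replicate (r + 1) (true, x.2) ++ List.replicate s (!true, y.2) := by
      simp only [tr, List.map_append, List.map_replicate]
      simp [hx, hy, hij.symm]
    have e2 : tr i (b :: q) = (!true, b.2) :: tr i q := by
      simp only [tr, List.map_cons]
      simp [hb, hij.symm]
    rw [e1, e2] at h1
    exact F2B hm3 true x.2 y.2 b.2 r s (tr i q) (by rw [tr_length, hl]) h1

/-- The system of dihedral congruences of an Artin group of large type. -/
def artinSys (hsymm : ∀ i j, M i j = M j i) (hlarge : ∀ i j, i ≠ j → 3 ≤ M i j) : DSys S where
  Deq := deq M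
  refl _ _ _ := rfl
  symm h := h.symm
  trans h h' := h.trans h'
  comm := by
    intro i j u v h
    unfold deq at h ⊢
    rw [drel_comm]
    exact h
  app := by
    intro i j u v u' v' h h'
    unfold deq at h h' ⊢
    rw [← FreeGroup.mul_mk, ← FreeGroup.mul_mk, map_mul, map_mul, h, h']
  inv := by
    intro i j a u
    unfold deq
    congr 1
    obtain ⟨a, s⟩ := a
    have : FreeGroup.Red.Step ((a, !s) :: (a, s) :: u) u := FreeGroup.Red.Step.cons_not_rev
    exact Quot.sound this
  par h := deq_par M h
  F1 hij hp hq hl hg h := deq_F1 M hsymm hlarge hij hp hq hl hg h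
  F2 hij hx hy hb hq hl h := deq_F2 M hsymm hlarge hij hx hy hb hq hl h

end concrete

/-! ### The Artin group -/

section final

variable {n : ℕ} {M : Fin n → Fin n → ℕ∞}

theorem toGen_bar (a : Letter n) : toGen n M (bar a) = (toGen n M a)⁻¹ := by
  obtain ⟨a, s⟩ := a
  cases s <;> simp [toGen, bar]

theorem wordElt_cons (a : Letter n) (w) : wordElt n M (a :: w) = toGen n M a * wordElt n M w := by
  simp [wordElt]

theorem wordElt_append (u v : List (Letter n)) :
    wordElt n M (u ++ v) = wordElt n M u * wordElt n M v := by
  simp [wordElt]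

theorem wordElt_mk (w : List (Letter n)) :
    wordElt n M w = PresentedGroup.mk (artinRels n M) (FreeGroup.mk w) := by
  induction w with
  | nil => change 1 = PresentedGroup.mk (artinRels n M) 1; simp
  | cons a w ih =>
    rw [wordElt_cons, lift_mk_cons, ih]
    rfl

theorem wordElt_deq {i j : Fin n} (hij : i ≠ j) {u v : List (Letter n)} (h : deq M i j u v) :
    wordElt n M u = wordElt n M v := by
  rw [wordElt_mk, wordElt_mk]
  have key : ∀ (a b : Fin n), a ≠ b → ∀ m : ℕ, M a b = m →
      altProd m (PresentedGroup.mk (artinRels n M) (FreeGroup.of a))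
        (PresentedGroup.mk (artinRels n M) (FreeGroup.of b)) =
      altProd m (PresentedGroup.mk (artinRels n M) (FreeGroup.of b))
        (PresentedGroup.mk (artinRels n M) (FreeGroup.of a)) := by
    intro a b hab m hm
    have : PresentedGroup.mk (artinRels n M) (altProd m (FreeGroup.of a) (FreeGroup.of b) *
        (altProd m (FreeGroup.of b) (FreeGroup.of a))⁻¹) = 1 :=
      PresentedGroup.one_of_mem ⟨a, b, hab, m, hm, rfl⟩
    rw [map_mul, map_inv, mul_inv_eq_one, map_altProd, map_altProd] at this
    exact this
  exact deq_hom M (PresentedGroup.mk (artinRels n M)) (fun m hm => key i j hij m hm)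
    (fun m hm => (key j i hij.symm m hm).symm) h

/-- The inverse word. -/
def invW (u : List (Letter n)) : List (Letter n) := (u.map bar).reverse

theorem wordElt_invW (u : List (Letter n)) : wordElt n M (invW u) = (wordElt n M u)⁻¹ := by
  induction u with
  | nil => simp [invW, wordElt]
  | cons a u ih =>
    have : invW (a :: u) = invW u ++ [bar a] := by simp [invW]
    rw [this, wordElt_append, ih, wordElt_cons, wordElt_cons, toGen_bar]
    simp [wordElt]

theorem toGen_mem (a : Letter n) : toGen n M a ∈ genSet n M := by
  obtain ⟨a, s⟩ := a
  cases s
  · exact ⟨a, Or.inr (by simp [toGen])⟩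
  · exact ⟨a, Or.inl (by simp [toGen])⟩

theorem exists_word (w : List (ArtinGroup n M)) (h : ∀ a ∈ w, a ∈ genSet n M) :
    ∃ u : List (Letter n), u.length = w.length ∧ wordElt n M u = w.prod := by
  induction w with
  | nil => exact ⟨[], rfl, rfl⟩
  | cons g w ih =>
    obtain ⟨u, hu, h2⟩ := ih (fun a ha => h a (by simp [ha]))
    obtain ⟨i, hi | hi⟩ := h g (by simp)
    · exact ⟨(i, true) :: u, by simp [hu], by rw [wordElt_cons, h2, List.prod_cons, hi]; simp [toGen]⟩
    · exact ⟨(i, false) :: u, by simp [hu], by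
        rw [wordElt_cons, h2, List.prod_cons, hi]; simp [toGen]⟩

theorem len_le (u : List (Letter n)) : ℓA n M (wordElt n M u) ≤ u.length := by
  apply Nat.sInf_le
  refine ⟨u.map (toGen n M), ?_, by simp, rfl⟩
  intro a ha
  obtain ⟨l, -, rfl⟩ := List.mem_map.1 ha
  exact toGen_mem l

theorem word_surj (g : ArtinGroup n M) : ∃ u : List (Letter n), wordElt n M u = g := by
  obtain ⟨x, rfl⟩ := PresentedGroup.mk_surjective (artinRels n M) g
  refine ⟨x.toWord, ?_⟩
  rw [wordElt_mk, FreeGroup.mk_toWord]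

theorem exists_min (g : ArtinGroup n M) : ∃ u : List (Letter n), wordElt n M u = g ∧
    u.length = ℓA n M g := by
  have hne : {N : ℕ | ∃ w : List (ArtinGroup n M), (∀ a ∈ w, a ∈ genSet n M) ∧ w.length = N ∧
      w.prod = g}.Nonempty := by
    obtain ⟨u, hu⟩ := word_surj g
    refine ⟨_, u.map (toGen n M), ?_, rfl, hu⟩
    intro a ha
    obtain ⟨l, -, rfl⟩ := List.mem_map.1 ha
    exact toGen_mem l
  obtain ⟨w, h1, h2, h3⟩ := Nat.sInf_mem hne
  obtain ⟨u, hu, h4⟩ := exists_word w h1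
  exact ⟨u, h4.trans h3, hu.trans h2⟩

theorem len_inv_le (g : ArtinGroup n M) : ℓA n M g⁻¹ ≤ ℓA n M g := by
  obtain ⟨u, rfl, h⟩ := exists_min g
  rw [← wordElt_invW, ← h]
  refine (len_le _).trans ?_
  simp [invW]

theorem len_inv (g : ArtinGroup n M) : ℓA n M g⁻¹ = ℓA n M g := by
  refine le_antisymm (len_inv_le g) ?_
  have := len_inv_le g⁻¹
  rwa [inv_inv] at this

theorem Gij_word {i j : Fin n} {h : ArtinGroup n M} (hh : h ∈ Gij n M i j) :
    ∃ u, IJ i j u ∧ wordElt n M u = h := by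
  unfold Gij at hh
  induction hh using Subgroup.closure_induction with
  | mem x hx =>
    simp only [Set.mem_insert_iff, Set.mem_singleton_iff] at hx
    rcases hx with rfl | rfl
    · exact ⟨[(i, true)], by simp [IJ], by simp [wordElt, toGen]⟩
    · exact ⟨[(j, true)], by simp [IJ], by simp [wordElt, toGen]⟩
  | one => exact ⟨[], IJ.nil, rfl⟩
  | mul x y _ _ hx hy =>
    obtain ⟨u, hu, rfl⟩ := hx
    obtain ⟨v, hv, rfl⟩ := hy
    exact ⟨u ++ v, IJ_append.2 ⟨hu, hv⟩, wordElt_append u v⟩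
  | inv x _ hx =>
    obtain ⟨u, hu, rfl⟩ := hx
    refine ⟨invW u, ?_, wordElt_invW u⟩
    intro l hl
    simp only [invW, List.mem_reverse, List.mem_map] at hl
    obtain ⟨a, ha, rfl⟩ := hl
    exact hu a ha

theorem toGen_mem_Gij {i j : Fin n} (b : Letter n) (hb : b.1 = i ∨ b.1 = j) :
    toGen n M b ∈ Gij n M i j := by
  have h : gen n M b.1 ∈ Gij n M i j := by
    apply Subgroup.subset_closure
    rcases hb with hb | hb <;> simp [hb]
  unfold toGen
  split_ifs
  · exact h
  · exact Subgroup.inv_mem _ h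

/-- Alternating words. -/
def altW : ℕ → Fin n → Fin n → List (Letter n)
  | 0, _, _ => []
  | k + 1, a, b => (a, true) :: altW k b a

theorem altW_mk (k : ℕ) : ∀ a b : Fin n,
    FreeGroup.mk (altW k a b) = altProd k (FreeGroup.of a) (FreeGroup.of b) := by
  induction k with
  | zero => intro a b; rfl
  | succ k ih =>
    intro a b
    rw [altProd, ← ih b a, altW]
    rfl

theorem altW_IJ (k : ℕ) : ∀ a b : Fin n, IJ a b (altW k a b) := by
  induction k with
  | zero => intro a b; exact IJ.nil
  | succ k ih =>
    intro a b
    exact IJ_cons.2 ⟨Or.inl rfl, (ih b a).comm⟩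

variable (hsymm : ∀ i j, M i j = M j i) (hlarge : ∀ i j, i ≠ j → 3 ≤ M i j)

theorem lift_perm (E : DSys (Fin n)) (w : List (Letter n)) (x : E.X) :
    FreeGroup.lift (fun i => DSys.perm E i) (FreeGroup.mk w) x = DSys.actW E w x := by
  induction w with
  | nil => change FreeGroup.lift (fun i => DSys.perm E i) 1 x = _; simp [DSys.actW]
  | cons a w ih =>
    rw [lift_mk_cons, Equiv.Perm.mul_apply, ih, DSys.actW]
    obtain ⟨a, s⟩ := a
    cases s
    · simp only [Bool.false_eq_true, if_false, FreeGroup.lift_apply_of]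
      rfl
    · simp only [if_true, FreeGroup.lift_apply_of]
      rfl

theorem perm_rels : ∀ r ∈ artinRels n M,
    FreeGroup.lift (fun i => DSys.perm (artinSys M hsymm hlarge) i) r = 1 := by
  rintro r ⟨a, b, hab, m, hm, rfl⟩
  rw [map_mul, map_inv, mul_inv_eq_one, ← altW_mk, ← altW_mk]
  ext1 x
  rw [lift_perm, lift_perm]
  refine DSys.actW_deq hab (altW_IJ m a b) (altW_IJ m b a).comm ?_ x
  change deq M a b _ _
  unfold deq
  rw [altW_mk, altW_mk]
  have : PresentedGroup.mk (drel M a b) (altProd m (FreeGroup.of a) (FreeGroup.of b) *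
      (altProd m (FreeGroup.of b) (FreeGroup.of a))⁻¹) = 1 :=
    PresentedGroup.one_of_mem ⟨a, b, Or.inl ⟨rfl, rfl⟩, m, hm, rfl⟩
  rwa [map_mul, map_inv, mul_inv_eq_one] at this

theorem actW_elt {u v : List (Letter n)} (h : wordElt n M u = wordElt n M v)
    (x : (artinSys M hsymm hlarge).X) :
    DSys.actW (artinSys M hsymm hlarge) u x = DSys.actW (artinSys M hsymm hlarge) v x := by
  have key : ∀ w, PresentedGroup.toGroup (perm_rels hsymm hlarge) (wordElt n M w) =
      FreeGroup.lift (fun i => DSys.perm (artinSys M hsymm hlarge) i) (FreeGroup.mk w) := by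
    intro w
    rw [wordElt_mk]
    rfl
  rw [← lift_perm, ← lift_perm, ← key, ← key, h]

theorem level_actW (E : DSys (Fin n)) (u : List (Letter n)) (x : E.X) :
    DSys.level E (DSys.actW E u x) ≤ u.length + DSys.level E x := by
  induction u with
  | nil => simp [DSys.actW]
  | cons a u ih =>
    have := DSys.level_act a (DSys.actW E u x)
    rw [DSys.actW, List.length_cons]
    omega

theorem len_good {w : List (Letter n)} (hw : (artinSys M hsymm hlarge).Good w) :
    ℓA n M (wordElt n M w) = w.length := by
  refine le_antisymm (len_le w) ?_
  obtain ⟨u, hu, hl⟩ := exists_min (wordElt n M w)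
  rw [← hl]
  have hw' : (artinSys M hsymm hlarge).Good (w ++ []) := by rwa [List.append_nil]
  have h1 := DSys.actW_good w [] hw'
  rw [← actW_elt hsymm hlarge hu] at h1
  have h2 := level_actW (artinSys M hsymm hlarge) u (DSys.X.mk [] hw'.suffix)
  rw [h1] at h2
  change (w ++ []).length ≤ u.length + 0 at h2
  simpa using h2

theorem elt_eqv {w v : List (Letter n)} (h : (artinSys M hsymm hlarge).Eqv w v) :
    wordElt n M w = wordElt n M v := by
  induction h with
  | nil => rfl
  | cons a _ ih => rw [wordElt_cons, wordElt_cons, ih]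
  | @dih a b p q t w v hab _ _ _ hd _ _ ih1 ih2 =>
    have := wordElt_deq hab hd
    rw [wordElt_cons, wordElt_cons] at this
    rw [wordElt_cons, wordElt_cons, ih1, ih2, wordElt_append, wordElt_append, ← mul_assoc, this,
      mul_assoc]

theorem exists_good (u : List (Letter n)) :
    ∃ w, (artinSys M hsymm hlarge).Good w ∧ wordElt n M w = wordElt n M u := by
  induction u with
  | nil => exact ⟨[], trivial, rfl⟩
  | cons a u ih =>
    obtain ⟨w, hw, he⟩ := ih
    rcases DSys.good_or hw a with ⟨w', h⟩ | h
    · have h2 := elt_eqv hsymm hlarge h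
      refine ⟨w', (DSys.Eqv.good hw h).1, ?_⟩
      rw [wordElt_cons, ← he, h2, wordElt_cons, toGen_bar, mul_inv_cancel_left]
    · exact ⟨a :: w, h, by rw [wordElt_cons, wordElt_cons, he]⟩

end final


/-- **Lemma.** In an Artin group of large type, if no nontrivial element of `G(i,j)` is
a left divisor of `g₁` or a right divisor of `g₂`, and `g₁ g₂ ∈ G(i,j)`, then
`g₁ g₂ = 1`. -/
theorem product_in_two_generator_subgroup_trivial
    (n : ℕ) (hn : 2 ≤ n) (M : Fin n → Fin n → ℕ∞)
    (hsymm : ∀ i j, M i j = M j i)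
    (hdiag : ∀ i, M i i = 1)
    (hlarge : ∀ i j, i ≠ j → 3 ≤ M i j)
    (i j : Fin n) (hij : i ≠ j) (g₁ g₂ : ArtinGroup n M)
    (h₁ : ∀ h ∈ Gij n M i j, h ≠ 1 → ¬ IsLeftDiv (ℓA n M) h g₁)
    (h₂ : ∀ h ∈ Gij n M i j, h ≠ 1 → ¬ IsRightDiv (ℓA n M) h g₂)
    (hprod : g₁ * g₂ ∈ Gij n M i j) :
    g₁ * g₂ = 1 := by
  obtain ⟨u₁, hu₁⟩ := word_surj (g₂⁻¹)
  obtain ⟨w, hw, hwe⟩ := exists_good hsymm hlarge u₁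
  rw [hu₁] at hwe
  have hg₂ : g₂ = (wordElt n M w)⁻¹ := by rw [hwe, inv_inv]
  have hno : (artinSys M hsymm hlarge).NoD i j w := by
    intro b t hb he
    have hgood := DSys.Eqv.good hw he
    have he2 := elt_eqv hsymm hlarge he
    have hb1 : (artinSys M hsymm hlarge).Good [b] := by
      refine ⟨trivial, fun w' h => ?_⟩
      have := DSys.Eqv.length h
      simp at this
    have l1 : ℓA n M (toGen n M b) = 1 := by
      have := len_good hsymm hlarge hb1
      simpa [wordElt] using this
    have l0 : ℓA n M 1 = 0 := by
      have := len_good hsymm hlarge (w := []) trivial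
      simpa [wordElt] using this
    have lt := len_good hsymm hlarge hgood.1
    have lw := len_good hsymm hlarge hgood
    refine h₂ (toGen n M b)⁻¹ (Subgroup.inv_mem _ (toGen_mem_Gij b hb)) ?_ ?_
    · intro h
      rw [inv_eq_one] at h
      rw [h, l0] at l1
      exact absurd l1 (by decide)
    · unfold IsRightDiv
      have e : g₂ * ((toGen n M b)⁻¹)⁻¹ = (wordElt n M t)⁻¹ := by
        rw [hg₂, he2, wordElt_cons, mul_inv_rev, inv_inv, inv_mul_cancel_right]
      rw [e, len_inv, len_inv, l1, lt, hg₂, len_inv, he2, lw, List.length_cons]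
  obtain ⟨u₀, hu₀, hue⟩ := Gij_word hprod
  obtain ⟨u, hu, hd, hgeo⟩ := (artinSys M hsymm hlarge).exists_geo u₀.length u₀ le_rfl hu₀
  have hue' : wordElt n M u = g₁ * g₂ := by rw [← hue, wordElt_deq hij hd]
  have hg1 : (artinSys M hsymm hlarge).Good (u ++ w) := DSys.good_app hno hw hu hgeo
  have hg0 : (artinSys M hsymm hlarge).Good (u ++ []) := by
    refine DSys.good_app (i := i) (j := j) ?_ trivial hu hgeo
    intro b t _ he
    have := DSys.Eqv.length he
    simp at this
  rw [List.append_nil] at hg0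
  by_contra hne
  refine h₁ _ hprod hne ?_
  have lu := len_good hsymm hlarge hg0
  have lw := len_good hsymm hlarge hw
  have luw := len_good hsymm hlarge hg1
  rw [wordElt_append, hue', hwe, mul_inv_cancel_right, List.length_append] at luw
  unfold IsLeftDiv
  have e : (g₁ * g₂)⁻¹ * g₁ = wordElt n M w := by rw [hwe]; group
  rw [e, lw, luw, ← hue', lu]

end ArtinRD
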